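/- arXiv:2403.15259 — 6 statements merged into one kernel-verified Lean document; each statement's English description precedes it below -/
import Mathlib

section
/- Let E be an ordered Polish space. Then the space M₁(E) of Borel probability measures on E, equipped with a complete metric generating the topology of weak convergence and with the stochastic order ⪯, is itself an ordered Polish space; in particular, if μₙ → μ and νₙ → ν weakly and μₙ ⪯ νₙ for all n, then μ ⪯ ν. -/
open MeasureTheory ProbabilityTheory Filter Topology

/-- `μ` is *stochastically smaller* than `ν` (written `μ ⪯ ν` in the paper):
`μ I ≤ ν I` for every Borel increasing (upper) set `I`. -/
def StochDom {E : Type*} [MeasurableSpace E] [Preorder E] (μ ν : Measure E) : Prop :=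
  ∀ I : Set E, MeasurableSet I → IsUpperSet I → μ I ≤ ν I

/-- A Markov kernel `P` is *(stochastically) monotone* if for every bounded monotone
measurable `g : E → [0,1]` the map `x ↦ ∫ g dP(x)` is again monotone. -/
def MonotoneKernel {E : Type*} [MeasurableSpace E] [Preorder E] (P : Kernel E E) : Prop :=
  ∀ g : E → ℝ, Measurable g → Monotone g → (∀ x, g x ∈ Set.Icc (0 : ℝ) 1) →
    Monotone fun x => ∫ y, g y ∂(P x)

/-- The `n`-step transition kernel `P⁽ⁿ⁾` of a Markov kernel `P`;
`kpow P n x` is the law of `Xₙˣ`, the chain with kernel `P` started at `x`. -/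
noncomputable def kpow {E : Type*} [MeasurableSpace E] (P : Kernel E E) : ℕ → Kernel E E
  | 0 => Kernel.id
  | n + 1 => P.comp (kpow P n)

/-- The process `Z` on `(Ω, μ)` is a (possibly time-inhomogeneous) Markov chain with
one-step kernels `Q n`, expressed through finite-dimensional distributions: for every
bounded measurable cylinder functional `φ` of the past and every Borel set `A`,
`E[φ(Z₀,…,Zₙ) · 1_A(Z_{n+1})] = E[φ(Z₀,…,Zₙ) · (Q n)(Zₙ, A)]`. -/
def MCStep {Ω S : Type*} [MeasurableSpace Ω] [MeasurableSpace S]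
    (μ : Measure Ω) (Q : ℕ → Kernel S S) (Z : ℕ → Ω → S) : Prop :=
  ∀ (n : ℕ) (A : Set S), MeasurableSet A →
    ∀ φ : (Fin (n + 1) → S) → ℝ, Measurable φ → (∀ v, φ v ∈ Set.Icc (0 : ℝ) 1) →
      ∫ ω, φ (fun i => Z i.1 ω) * A.indicator (fun _ => (1 : ℝ)) (Z (n + 1) ω) ∂μ
        = ∫ ω, φ (fun i => Z i.1 ω) * ((Q n) (Z n ω) A).toReal ∂μ

/-- `X` on `(Ω, μ)` is a time-homogeneous Markov chain with kernel `P` started at `x`. -/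
def IsMChain {E Ω : Type*} [MeasurableSpace E] [MeasurableSpace Ω]
    (P : Kernel E E) (x : E) (μ : Measure Ω) (X : ℕ → Ω → E) : Prop :=
  IsProbabilityMeasure μ ∧ (∀ n, Measurable (X n)) ∧ (∀ᵐ ω ∂μ, X 0 ω = x) ∧
    MCStep μ (fun _ => P) X

/-- A *Markovian coupling* of two chains with kernel `P` started at `x` and `y`:
both coordinates are Markov chains with kernel `P` and the pair process is itself a
(possibly time-inhomogeneous) Markov chain. -/
def IsMarkovianCoupling {E Ω : Type*} [MeasurableSpace E] [MeasurableSpace Ω]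
    (P : Kernel E E) (x y : E) (μ : Measure Ω) (X Y : ℕ → Ω → E) : Prop :=
  IsMChain P x μ X ∧ IsMChain P y μ Y ∧
    ∃ Q : ℕ → Kernel (E × E) (E × E), (∀ n, IsMarkovKernel (Q n)) ∧
      MCStep μ Q fun n ω => (X n ω, Y n ω)

/-- A set `H ⊆ E × E` is *achievable* for the kernel `P` if for all `x, y` there is a
Markovian coupling of the chains started at `x` and `y` whose hitting time of `H`
is finite almost surely. -/
def Achievable {E : Type*} [MeasurableSpace E] (P : Kernel E E) (H : Set (E × E)) : Prop :=
  ∀ x y : E, ∃ (Ω : Type) (_ : MeasurableSpace Ω) (μ : Measure Ω) (X Y : ℕ → Ω → E),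
    IsMarkovianCoupling P x y μ X Y ∧ ∀ᵐ ω ∂μ, ∃ n, (X n ω, Y n ω) ∈ H

/-- Condition (BMC): every increasing sequence bounded above by some element converges. -/
def BMC (E : Type*) [Preorder E] [TopologicalSpace E] : Prop :=
  ∀ (x : ℕ → E) (y : E), Monotone x → (∀ n, x n ≤ y) → ∃ l, Tendsto x atTop (nhds l)

/-- The ordered metric space `E` is *normal*: there is a continuous `h : [0,∞) → [0,∞)`
with `h 0 = 0` such that `x ⪯ y ⪯ z` implies `d(x,y) ≤ h (d(x,z))`. -/
def NormalOrdered (E : Type*) [PseudoMetricSpace E] [Preorder E] : Prop :=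
  ∃ h : ℝ → ℝ, ContinuousOn h (Set.Ici 0) ∧ h 0 = 0 ∧ (∀ t ≥ (0 : ℝ), 0 ≤ h t) ∧
    ∀ x y z : E, x ≤ y → y ≤ z → dist x y ≤ h (dist x z)

/-- Condition (PR): there are `x₀ ⪯ y₀` such that the hitting times
`ν⁻ = min {n ≥ 1 : Xₙ^{x₀} ⪰ x₀}` and `ν⁺ = min {n ≥ 1 : Xₙ^{y₀} ⪯ y₀}`
have finite expectations. -/
def PRCond {E : Type*} [MeasurableSpace E] [Preorder E] (P : Kernel E E) : Prop :=
  ∃ x₀ y₀ : E, x₀ ≤ y₀ ∧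
    (∃ (Ω : Type) (_ : MeasurableSpace Ω) (μ : Measure Ω) (X : ℕ → Ω → E),
      IsMChain P x₀ μ X ∧ (∀ᵐ ω ∂μ, ∃ n, 1 ≤ n ∧ x₀ ≤ X n ω) ∧
      Integrable (fun ω => ((sInf {n : ℕ | 1 ≤ n ∧ x₀ ≤ X n ω} : ℕ) : ℝ)) μ) ∧
    (∃ (Ω : Type) (_ : MeasurableSpace Ω) (μ : Measure Ω) (X : ℕ → Ω → E),
      IsMChain P y₀ μ X ∧ (∀ᵐ ω ∂μ, ∃ n, 1 ≤ n ∧ X n ω ≤ y₀) ∧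
      Integrable (fun ω => ((sInf {n : ℕ | 1 ≤ n ∧ X n ω ≤ y₀} : ℕ) : ℝ)) μ)


lemma aux_tight {X : Type*} [MetricSpace X] [CompleteSpace X] [MeasurableSpace X]
    (S : Set (Measure X))
    (h : ∀ ε : ℝ, 0 < ε → ∃ t : Set X, t.Finite ∧ ∀ μ ∈ S,
      μ (⋃ x ∈ t, Metric.closedBall x ε)ᶜ ≤ ENNReal.ofReal ε) : IsTightMeasureSet S := by
  rw [isTightMeasureSet_iff_exists_isCompact_measure_compl_le]
  intro ε hε
  obtain ⟨δ, hδ, hsum⟩ := ENNReal.exists_pos_sum_of_countable hε.ne' ℕ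
  let e : ℕ → ℝ := fun m => min (δ m : ℝ) (1 / ((m : ℝ) + 1))
  have he : ∀ m, 0 < e m := fun m => lt_min (by exact_mod_cast hδ m) (by positivity)
  choose t htf ht using fun m => h (e m) (he m)
  refine ⟨⋂ m, ⋃ x ∈ t m, Metric.closedBall x (e m), ?_, ?_⟩
  · refine TotallyBounded.isCompact_of_isClosed ?_ ?_
    · refine Metric.totallyBounded_iff.mpr fun r hr => ?_
      obtain ⟨m, hm⟩ := exists_nat_one_div_lt hr
      refine ⟨t m, htf m, (Set.iInter_subset _ m).trans ?_⟩
      refine Set.iUnion₂_mono fun x _ => Metric.closedBall_subset_ball ?_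
      exact (min_le_right _ _).trans_lt hm
    · exact isClosed_iInter fun m => (htf m).isClosed_biUnion fun _ _ => Metric.isClosed_closedBall
  · intro μ hμ
    rw [Set.compl_iInter]
    refine (measure_iUnion_le _).trans (le_trans (ENNReal.tsum_le_tsum fun m => ?_) hsum.le)
    refine (ht m μ hμ).trans ?_
    rw [← ENNReal.ofReal_coe_nnreal]
    exact ENNReal.ofReal_le_ofReal (min_le_left _ _)

lemma aux_cover {X : Type*} [MetricSpace X] [CompleteSpace X] [SecondCountableTopology X]
    [MeasurableSpace X] [BorelSpace X] (μ : ProbabilityMeasure X) (ε : ℝ) (hε : 0 < ε) :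
    ∃ t : Set X, t.Finite ∧
      (μ : Measure X) (⋃ x ∈ t, Metric.ball x ε)ᶜ ≤ ENNReal.ofReal ε := by
  have h := isTightMeasureSet_singleton (μ := (μ : Measure X))
  rw [isTightMeasureSet_iff_exists_isCompact_measure_compl_le] at h
  obtain ⟨K, hK, hKm⟩ := h (ENNReal.ofReal ε) (by simpa using hε)
  obtain ⟨t, -, htf, hKt⟩ := hK.finite_cover_balls hε
  exact ⟨t, htf, (measure_mono (Set.compl_subset_compl.2 hKt)).trans (hKm _ rfl)⟩

lemma aux_complete {X : Type*} [MetricSpace X] [CompleteSpace X] [SecondCountableTopology X]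
    [MeasurableSpace X] [BorelSpace X] :
    CompleteSpace (LevyProkhorov (ProbabilityMeasure X)) := by
  refine Metric.complete_of_cauchySeq_tendsto fun u hu => ?_
  have htight : IsTightMeasureSet {((μ : ProbabilityMeasure X) : Measure X) |
      μ ∈ Set.range fun n => (u n).toMeasure} := by
    refine aux_tight _ fun ε hε => ?_
    have hε2 : 0 < ε / 2 := by positivity
    obtain ⟨N, hN⟩ := Metric.cauchySeq_iff'.1 hu (ε / 2) hε2
    choose t htf ht using fun n => aux_cover (u n).toMeasure (ε / 2) hε2
    refine ⟨⋃ n ∈ Set.Iic N, t n, (Set.finite_Iic N).biUnion fun n _ => htf n, ?_⟩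
    rintro _ ⟨_, ⟨n, rfl⟩, rfl⟩
    rcases le_total n N with hn | hn
    · refine (measure_mono (Set.compl_subset_compl.2 ?_)).trans
        ((ht n).trans (ENNReal.ofReal_le_ofReal (by linarith)))
      refine Set.iUnion₂_subset fun x hx => ?_
      refine Set.Subset.trans ?_ (Set.subset_biUnion_of_mem
        (u := fun x => Metric.closedBall x ε) (Set.mem_biUnion (Set.mem_Iic.2 hn) hx))
      exact Metric.ball_subset_closedBall.trans (Metric.closedBall_subset_closedBall (by linarith))
    · have h1 := hN n hn
      rw [dist_comm] at h1
      have h2 : levyProkhorovEDist ((u N).toMeasure : Measure X) ((u n).toMeasure : Measure X)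
          < ENNReal.ofReal (ε / 2) := by
        rw [← LevyProkhorov.edist_probabilityMeasure_def, edist_dist]
        exact (ENNReal.ofReal_lt_ofReal_iff hε2).2 h1
      set B : Set X := (⋃ x ∈ ⋃ n ∈ Set.Iic N, t n, Metric.closedBall x ε)ᶜ with hB
      have hBm : MeasurableSet B := by
        refine (IsClosed.measurableSet ?_).compl
        exact ((Set.finite_Iic N).biUnion fun n _ => htf n).isClosed_biUnion
          fun _ _ => Metric.isClosed_closedBall
      have h3 := right_measure_le_of_levyProkhorovEDist_lt h2 hBm
      rw [ENNReal.toReal_ofReal hε2.le] at h3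
      have h4 : Metric.thickening (ε / 2) B ⊆ (⋃ x ∈ t N, Metric.ball x (ε / 2))ᶜ := by
        intro y hy hy'
        obtain ⟨b, hb, hyb⟩ := Metric.mem_thickening_iff.1 hy
        obtain ⟨x, hx, hxy⟩ := Set.mem_iUnion₂.1 hy'
        refine hb (Set.mem_biUnion (Set.mem_biUnion (Set.mem_Iic.2 le_rfl) hx) ?_)
        rw [Metric.mem_closedBall]
        rw [Metric.mem_ball] at hxy
        have := dist_triangle b y x
        rw [dist_comm b y] at this
        linarith
      calc _ ≤ _ := h3
        _ ≤ ENNReal.ofReal (ε / 2) + ENNReal.ofReal (ε / 2) := by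
            gcongr
            exact (measure_mono h4).trans (ht N)
        _ = ENNReal.ofReal ε := by
            rw [← ENNReal.ofReal_add hε2.le hε2.le]; congr 1; ring
  have hc := isCompact_closure_of_isTightMeasureSet htight
  obtain ⟨μ, -, φ, hφ, hlim⟩ := hc.isSeqCompact
    (x := fun n => (u n).toMeasure) (fun n => subset_closure ⟨n, rfl⟩)
  refine ⟨LevyProkhorov.ofMeasure μ, tendsto_nhds_of_cauchySeq_of_subseq hu hφ.tendsto_atTop ?_⟩
  exact (LevyProkhorov.continuous_ofMeasure_probabilityMeasure.tendsto μ).comp hlim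

lemma aux_inducing {X Y : Type*} [TopologicalSpace X] [PolishSpace X]
    [MeasurableSpace X] [BorelSpace X] [TopologicalSpace Y] [PolishSpace Y]
    [MeasurableSpace Y] [BorelSpace Y] (f : X → Y) (hf : IsEmbedding f) :
    IsInducing (fun μ : ProbabilityMeasure X => μ.map hf.continuous.measurable.aemeasurable) := by
  rw [isInducing_iff_nhds]
  intro μ
  refine le_antisymm ?_ ?_
  · exact ((ProbabilityMeasure.continuous_map hf.continuous).tendsto μ).le_comap
  · rw [← tendsto_id']
    refine tendsto_of_forall_isOpen_le_liminf' fun G hG => ?_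
    obtain ⟨G', hG', rfl⟩ := hf.isInducing.isOpen_iff.1 hG
    have := ProbabilityMeasure.le_liminf_measure_open_of_tendsto
      (tendsto_comap (f := fun μ : ProbabilityMeasure X =>
        μ.map hf.continuous.measurable.aemeasurable) 
        (x := 𝓝 (μ.map hf.continuous.measurable.aemeasurable))) hG'
    simpa [Measure.map_apply hf.continuous.measurable hG'.measurableSet] using this

lemma aux_secondCountable {X : Type*} [TopologicalSpace X] [PolishSpace X]
    [MeasurableSpace X] [BorelSpace X] : SecondCountableTopology (ProbabilityMeasure X) := by
  let := TopologicalSpace.upgradeIsCompletelyMetrizable X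
  obtain ⟨F, hF⟩ := Metric.PiNatEmbed.exists_embedding_to_hilbert_cube (X := X)
  have h2 : SecondCountableTopology (ProbabilityMeasure (ℕ → unitInterval)) := by
    let := TopologicalSpace.metrizableSpaceMetric (ProbabilityMeasure (ℕ → unitInterval))
    infer_instance
  exact (aux_inducing F hF).secondCountableTopology

lemma aux_polish {X : Type*} [TopologicalSpace X] [PolishSpace X]
    [MeasurableSpace X] [BorelSpace X] : PolishSpace (ProbabilityMeasure X) := by
  have := aux_secondCountable (X := X)
  let := TopologicalSpace.upgradeIsCompletelyMetrizable X
  have := aux_complete (X := X)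
  have : TopologicalSpace.IsCompletelyMetrizableSpace (ProbabilityMeasure X) :=
    (LevyProkhorov.probabilityMeasureHomeomorph (Ω := X)).isClosedEmbedding.IsCompletelyMetrizableSpace
  infer_instance

/-- The increasing hull of a set. -/
def upHull {E : Type*} [LE E] (s : Set E) : Set E := {y | ∃ x ∈ s, x ≤ y}

lemma aux_sepSets {E : Type*} [TopologicalSpace E] [PolishSpace E] [MeasurableSpace E]
    [BorelSpace E] [PartialOrder E] [OrderClosedTopology E] (U V : Set E)
    (hU : MeasurableSet U) (hV : MeasurableSet V) (hUV : ∀ x ∈ U, ∀ y ∈ V, ¬ x ≤ y) :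
    ∃ B : Set E, MeasurableSet B ∧ IsUpperSet B ∧ U ⊆ B ∧ Disjoint B V := by
  have hM : MeasurableSet {p : E × E | p.1 ≤ p.2} :=
    (isClosed_le continuous_fst continuous_snd).measurableSet
  have hup : ∀ s : Set E, MeasurableSet s → AnalyticSet (upHull s) := by
    intro s hs
    have h1 : upHull s = Prod.snd '' ({p : E × E | p.1 ≤ p.2} ∩ Prod.fst ⁻¹' s) := by
      ext y; constructor
      · rintro ⟨x, hx, hxy⟩; exact ⟨(x, y), ⟨hxy, hx⟩, rfl⟩
      · rintro ⟨⟨x, y⟩, ⟨hxy, hx⟩, rfl⟩; exact ⟨x, hx, hxy⟩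
    rw [h1]
    exact (hM.inter (measurable_fst hs)).analyticSet_image measurable_snd
  set L : Set E := {x | ∃ y ∈ V, x ≤ y} with hL
  have hLa : AnalyticSet L := by
    have h1 : L = Prod.fst '' ({p : E × E | p.1 ≤ p.2} ∩ Prod.snd ⁻¹' V) := by
      ext x; constructor
      · rintro ⟨y, hy, hxy⟩; exact ⟨(x, y), ⟨hxy, hy⟩, rfl⟩
      · rintro ⟨⟨x, y⟩, ⟨hxy, hy⟩, rfl⟩; exact ⟨y, hy, hxy⟩
    rw [h1]
    exact (hM.inter (measurable_snd hV)).analyticSet_image measurable_fst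
  have hstep : ∀ B : {B : Set E // MeasurableSet B ∧ Disjoint B L},
      ∃ C : {B : Set E // MeasurableSet B ∧ Disjoint B L}, upHull B.1 ⊆ C.1 := by
    rintro ⟨B, hB, hBL⟩
    have hd : Disjoint (upHull B) L := by
      rw [Set.disjoint_left]
      rintro w ⟨b, hb, hbw⟩ ⟨v, hv, hwv⟩
      exact Set.disjoint_left.1 hBL hb ⟨v, hv, hbw.trans hwv⟩
    obtain ⟨C, h1, h2, h3⟩ := (hup B hB).measurablySeparable hLa hd
    exact ⟨⟨C, h3, h2.symm⟩, h1⟩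
  choose g hg using hstep
  have hUL : Disjoint U L := by
    rw [Set.disjoint_left]
    rintro x hx ⟨y, hy, hxy⟩
    exact hUV x hx y hy hxy
  let B : ℕ → {B : Set E // MeasurableSet B ∧ Disjoint B L} :=
    fun n => Nat.rec ⟨U, hU, hUL⟩ (fun _ b => g b) n
  refine ⟨⋃ n, (B n).1, MeasurableSet.iUnion fun n => (B n).2.1, ?_, ?_, ?_⟩
  · intro x y hxy hx
    obtain ⟨n, hn⟩ := Set.mem_iUnion.1 hx
    exact Set.mem_iUnion.2 ⟨n + 1, hg (B n) (show y ∈ upHull (B n).1 from ⟨x, hn, hxy⟩)⟩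
  · exact Set.subset_iUnion (fun n => (B n).1) 0
  · rw [Set.disjoint_iUnion_left]
    intro n
    have hVL : V ⊆ L := fun v hv => ⟨v, hv, le_rfl⟩
    exact (B n).2.2.mono_right hVL

lemma aux_generate {E : Type*} [TopologicalSpace E] [PolishSpace E] [m : MeasurableSpace E]
    [BorelSpace E] [PartialOrder E] [OrderClosedTopology E] :
    m = MeasurableSpace.generateFrom {I : Set E | MeasurableSet I ∧ IsUpperSet I} := by
  classical
  refine le_antisymm ?_ (MeasurableSpace.generateFrom_le fun I hI => hI.1)
  obtain ⟨b, hbc, -, hb⟩ := TopologicalSpace.exists_countable_basis E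
  let P : Set (Set E × Set E) := {p | p ∈ b ×ˢ b ∧ ∀ x ∈ p.1, ∀ y ∈ p.2, ¬ x ≤ y}
  have hPc : P.Countable := (hbc.prod hbc).mono fun p hp => hp.1
  have hBex : ∀ p : P, ∃ B : Set E, MeasurableSet B ∧ IsUpperSet B ∧ p.1.1 ⊆ B ∧
      Disjoint B p.1.2 := fun p =>
    aux_sepSets _ _ (hb.isOpen p.2.1.1).measurableSet (hb.isOpen p.2.1.2).measurableSet p.2.2
  choose B hBm hBu hB1 hB2 using hBex
  have hsep : ∀ x y : E, ¬ x ≤ y → ∃ p : P, x ∈ B p ∧ y ∉ B p := by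
    intro x y hxy
    have ho : IsOpen {p : E × E | ¬ p.1 ≤ p.2} :=
      (isClosed_le continuous_fst continuous_snd).isOpen_compl
    obtain ⟨s, ⟨U, hU, V, hV, rfl⟩, hxs, hs⟩ :=
      (hb.prod hb).exists_subset_of_mem_open (a := (x, y)) hxy ho
    refine ⟨⟨(U, V), ⟨hU, hV⟩, fun x hx y hy => hs (Set.mk_mem_prod hx hy)⟩, ?_, ?_⟩
    · exact hB1 _ hxs.1
    · exact fun h => Set.disjoint_left.1 (hB2 _) h hxs.2
  have : Countable P := hPc.to_subtype
  let f : E → P → Prop := fun x p => x ∈ B p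
  have hfm : Measurable f := measurable_pi_iff.2 fun p => measurable_mem.2 (hBm p)
  have hfi : Function.Injective f := by
    intro x y hxy
    apply le_antisymm
    · by_contra h
      obtain ⟨p, h1, h2⟩ := hsep x y h
      exact h2 (by have := congrFun hxy p; simpa [f, h1] using this)
    · by_contra h
      obtain ⟨p, h1, h2⟩ := hsep y x h
      exact h2 (by have := congrFun hxy p; simpa [f, h1] using this)
  have hfe := hfm.measurableEmbedding hfi
  intro s hs
  have h1 := hfe.measurableSet_image.2 hs
  rw [← hfi.preimage_image s]
  have hfm' : @Measurable _ _
      (MeasurableSpace.generateFrom {I : Set E | MeasurableSet I ∧ IsUpperSet I}) _ f := by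
    refine @measurable_pi_lambda _ _ _
      (MeasurableSpace.generateFrom {I : Set E | MeasurableSet I ∧ IsUpperSet I}) _ _
      fun p => ?_
    refine (@measurable_mem _ (B p)
      (MeasurableSpace.generateFrom {I : Set E | MeasurableSet I ∧ IsUpperSet I})).2 ?_
    exact MeasurableSpace.measurableSet_generateFrom ⟨hBm p, hBu p⟩
  exact hfm' h1

lemma aux_antisymm {E : Type*} [TopologicalSpace E] [PolishSpace E] [MeasurableSpace E]
    [BorelSpace E] [PartialOrder E] [OrderClosedTopology E] (μ ν : ProbabilityMeasure E)
    (h1 : StochDom (μ : Measure E) (ν : Measure E))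
    (h2 : StochDom (ν : Measure E) (μ : Measure E)) : μ = ν := by
  apply ProbabilityMeasure.toMeasure_injective
  refine ext_of_generate_finite _ aux_generate ?_
    (fun I hI => le_antisymm (h1 I hI.1 hI.2) (h2 I hI.1 hI.2)) (by simp)
  intro s hs t ht _
  exact ⟨hs.1.inter ht.1, hs.2.inter ht.2⟩

lemma aux_upHull_closed {E : Type*} [TopologicalSpace E] [PartialOrder E] [OrderClosedTopology E]
    {K : Set E} (hK : IsCompact K) : IsClosed (upHull K) := by
  have h1 : upHull K = Prod.snd '' ({p : E × E | p.1 ≤ p.2} ∩ K ×ˢ Set.univ) := by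
    ext y; constructor
    · rintro ⟨x, hx, hxy⟩; exact ⟨(x, y), ⟨hxy, hx, trivial⟩, rfl⟩
    · rintro ⟨⟨x, y⟩, ⟨hxy, hx, -⟩, rfl⟩; exact ⟨x, hx, hxy⟩
  have : CompactSpace K := isCompact_iff_compactSpace.1 hK
  have h2 : upHull K = Prod.snd '' {p : K × E | (p.1 : E) ≤ p.2} := by
    ext y; constructor
    · rintro ⟨x, hx, hxy⟩; exact ⟨(⟨x, hx⟩, y), hxy, rfl⟩
    · rintro ⟨⟨x, y⟩, hxy, rfl⟩; exact ⟨x, x.2, hxy⟩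
  rw [h2]
  exact isClosedMap_snd_of_compactSpace _ (isClosed_le (by fun_prop) (by fun_prop))

lemma aux_upHull_upper {E : Type*} [Preorder E] (K : Set E) : IsUpperSet (upHull K) :=
  fun _ _ hxy ⟨z, hz, hzx⟩ => ⟨z, hz, hzx.trans hxy⟩

lemma aux_compact {E : Type*} [TopologicalSpace E] [PolishSpace E] [MeasurableSpace E]
    [BorelSpace E] [PartialOrder E] [OrderClosedTopology E]
    (μs νs : ℕ → ProbabilityMeasure E) (μ ν : ProbabilityMeasure E)
    (hμ : Tendsto μs atTop (nhds μ)) (hν : Tendsto νs atTop (nhds ν))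
    (h : ∀ n, StochDom (μs n : Measure E) (νs n : Measure E)) (K : Set E) (hK : IsCompact K) :
    (μ : Measure E) K ≤ (ν : Measure E) (upHull K) := by
  let := TopologicalSpace.upgradeIsCompletelyMetrizable E
  have htight := isTightMeasureSet_of_isCompact_closure (S := Set.range μs)
    (hμ.isCompact_insert_range.closure_of_subset (Set.subset_insert _ _))
  rw [isTightMeasureSet_iff_exists_isCompact_measure_compl_le] at htight
  refine ENNReal.le_of_forall_pos_le_add fun ε hε _ => ?_
  obtain ⟨C, hC, hCm⟩ := htight ε (by exact_mod_cast hε)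
  let r : ℕ → ℝ := fun m => 1 / ((m : ℝ) + 1)
  have hr : ∀ m, 0 < r m := fun m => by positivity
  let D : ℕ → Set E := fun m => Metric.cthickening (r m) K ∩ (C ∪ K)
  have hD : ∀ m, IsCompact (D m) := fun m =>
    (hC.union hK).inter_left Metric.isClosed_cthickening
  have hDanti : Antitone D := fun m n hmn => Set.inter_subset_inter_left _
    (Metric.cthickening_mono (one_div_le_one_div_of_le (by positivity) (by gcongr)) _)
  let F : ℕ → Set E := fun m => upHull (D m)
  have hF : ∀ m, IsClosed (F m) := fun m => aux_upHull_closed (hD m)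
  have hFanti : Antitone F := fun m n hmn y ⟨x, hx, hxy⟩ => ⟨x, hDanti hmn hx, hxy⟩
  have hFi : ⋂ m, F m ⊆ upHull K := by
    intro y hy
    have hne : (⋂ m, D m ∩ Set.Iic y).Nonempty := by
      refine IsCompact.nonempty_iInter_of_sequence_nonempty_isCompact_isClosed _ ?_ ?_ ?_ ?_
      · exact fun m => Set.inter_subset_inter_left _ (hDanti m.le_succ)
      · intro m
        obtain ⟨x, hx, hxy⟩ := Set.mem_iInter.1 hy m
        exact ⟨x, hx, hxy⟩
      · exact (hD 0).inter_right isClosed_Iic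
      · exact fun m => (hD m).isClosed.inter isClosed_Iic
    obtain ⟨x, hx⟩ := hne
    rw [Set.mem_iInter] at hx
    refine ⟨x, ?_, (hx 0).2⟩
    rw [← hK.isClosed.closure_eq, Metric.closure_eq_iInter_cthickening]
    refine Set.mem_iInter₂.2 fun δ hδ => ?_
    obtain ⟨m, hm⟩ := exists_nat_one_div_lt hδ
    exact Metric.cthickening_mono hm.le _ (hx m).1.1
  have key : ∀ m, (μ : Measure E) K ≤ (ν : Measure E) (F m) + ε := by
    intro m
    have h1 : (μ : Measure E) K ≤
        atTop.liminf fun n => (μs n : Measure E) (Metric.thickening (r m) K) :=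
      (measure_mono (Metric.self_subset_thickening (hr m) K)).trans
        (ProbabilityMeasure.le_liminf_measure_open_of_tendsto hμ Metric.isOpen_thickening)
    have h2 : ∀ n, (μs n : Measure E) (Metric.thickening (r m) K) ≤
        (νs n : Measure E) (F m) + ε := by
      intro n
      have hsub : Metric.thickening (r m) K ⊆ F m ∪ Cᶜ := by
        intro x hx
        by_cases hxC : x ∈ C
        · exact Or.inl ⟨x, ⟨Metric.thickening_subset_cthickening _ _ hx, Or.inl hxC⟩, le_rfl⟩
        · exact Or.inr hxC
      refine (measure_mono hsub).trans ((measure_union_le _ _).trans (add_le_add ?_ ?_))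
      · exact h n _ (hF m).measurableSet (aux_upHull_upper _)
      · exact hCm _ ⟨_, ⟨n, rfl⟩, rfl⟩
    have h3 := ProbabilityMeasure.limsup_measure_closed_le_of_tendsto hν (hF m)
    refine ENNReal.le_of_forall_pos_le_add fun η hη _ => ?_
    have h4 : (ν : Measure E) (F m) < (ν : Measure E) (F m) + η :=
      ENNReal.lt_add_right (measure_ne_top _ _) (by exact_mod_cast hη.ne')
    have h5 := eventually_lt_of_limsup_lt (h3.trans_lt h4)
    refine h1.trans (liminf_le_of_frequently_le' (Eventually.frequently ?_))
    filter_upwards [h5] with n hn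
    refine (h2 n).trans ?_
    rw [add_right_comm]
    gcongr
  have hlim := tendsto_measure_iInter_atTop (μ := (ν : Measure E))
    (fun m => (hF m).measurableSet.nullMeasurableSet) hFanti ⟨0, measure_ne_top _ _⟩
  have h6 : (μ : Measure E) K ≤ (ν : Measure E) (⋂ m, F m) + ε :=
    ge_of_tendsto' (hlim.add_const _) key
  exact h6.trans (by gcongr)

lemma aux_closed {E : Type*} [TopologicalSpace E] [PolishSpace E] [MeasurableSpace E]
    [BorelSpace E] [PartialOrder E] [OrderClosedTopology E]
    (μs νs : ℕ → ProbabilityMeasure E) (μ ν : ProbabilityMeasure E)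
    (hμ : Tendsto μs atTop (nhds μ)) (hν : Tendsto νs atTop (nhds ν))
    (h : ∀ n, StochDom (μs n : Measure E) (νs n : Measure E)) :
    StochDom (μ : Measure E) (ν : Measure E) := by
  intro I hI hIu
  let := TopologicalSpace.upgradeIsCompletelyMetrizable E
  rw [hI.measure_eq_iSup_isCompact_of_ne_top (measure_ne_top _ _)]
  refine iSup₂_le fun K hKI => iSup_le fun hK => ?_
  refine (aux_compact μs νs μ ν hμ hν h K hK).trans (measure_mono ?_)
  rintro y ⟨x, hx, hxy⟩
  exact hIu hxy (hKI hx)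

/-- For an ordered Polish space `E`, the space of Borel probability measures
with the topology of weak convergence and the stochastic order is again an ordered Polish
space: it is Polish, the stochastic order is a partial order (antisymmetric) whose graph
is closed; in particular, if `μₙ → μ`, `νₙ → ν` weakly and `μₙ ⪯ νₙ` for all `n`,
then `μ ⪯ ν`. -/
theorem stmt1 {E : Type*} [MetricSpace E] [PolishSpace E] [MeasurableSpace E] [BorelSpace E]
    [PartialOrder E] [OrderClosedTopology E] :
    PolishSpace (ProbabilityMeasure E) ∧
    (∀ μ ν : ProbabilityMeasure E,
      StochDom (μ : Measure E) (ν : Measure E) → StochDom (ν : Measure E) (μ : Measure E) →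
        μ = ν) ∧
    IsClosed {p : ProbabilityMeasure E × ProbabilityMeasure E |
      StochDom (p.1 : Measure E) (p.2 : Measure E)} ∧
    ∀ (μs νs : ℕ → ProbabilityMeasure E) (μ ν : ProbabilityMeasure E),
      Tendsto μs atTop (nhds μ) → Tendsto νs atTop (nhds ν) →
      (∀ n, StochDom (μs n : Measure E) (νs n : Measure E)) →
      StochDom (μ : Measure E) (ν : Measure E) := by
  refine ⟨aux_polish, aux_antisymm, ?_, aux_closed⟩
  refine IsSeqClosed.isClosed fun u p hu hp => ?_
  exact aux_closed (fun n => (u n).1) (fun n => (u n).2) p.1 p.2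
    ((continuous_fst.tendsto p).comp hp) ((continuous_snd.tendsto p).comp hp) hu
end

section
/- Let E be an ordered Polish space and let μ, μ₁, μ₂, … be Borel probability measures on E such that μ₁ ⪯ μ₂ ⪯ … (increasing in stochastic order) and μᵢ ⪯ μ for every i ∈ ℕ. Then there exist, on some common probability space, E-valued random variables X, X₁, X₂, … with laws μ, μ₁, μ₂, … respectively, such that X₁ ⪯ X₂ ⪯ … ⪯ X almost surely. -/
open MeasureTheory ProbabilityTheory Filter Topology

theorem hb_aux {X : Type*} [TopologicalSpace X] [CompactSpace X] [TopologicalSpace.MetrizableSpace X]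
    [MeasurableSpace X] [BorelSpace X] (R : Set X) (hR : IsClosed R)
    {V : Type*} [AddCommGroup V] [Module ℝ V] (S : V →ₗ[ℝ] C(X, ℝ)) (L : V →ₗ[ℝ] ℝ)
    (h : ∀ v c, (∀ x ∈ R, S v x ≤ c) → L v ≤ c) :
    ∃ π : Measure X, IsProbabilityMeasure π ∧ (∀ᵐ x ∂π, x ∈ R) ∧ ∀ v, ∫ x, S v x ∂π = L v := by
  let _ := TopologicalSpace.metrizableSpaceMetric X
  have hne : R.Nonempty := by
    by_contra hcon
    rw [Set.not_nonempty_iff_eq_empty] at hcon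
    have := h 0 (-1) (by simp [hcon])
    simp at this
    linarith
  have : Nonempty R := hne.to_subtype
  have hbdd : ∀ φ : C(X, ℝ), BddAbove (Set.range fun x : R => φ x) := fun φ =>
    ((isCompact_range φ.continuous).bddAbove).mono (by rintro _ ⟨x, rfl⟩; exact ⟨x, rfl⟩)
  have hker : LinearMap.ker S ≤ LinearMap.ker L := by
    intro v hv
    rw [LinearMap.mem_ker] at hv ⊢
    apply le_antisymm
    · exact h v 0 (by simp [hv])
    · have := h (-v) 0 (by simp [hv])
      simp at this; exact this
  obtain ⟨T, hT⟩ : ∃ T : LinearMap.range S →ₗ[ℝ] ℝ, ∀ v, T ⟨S v, v, rfl⟩ = L v := by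
    refine ⟨((LinearMap.ker S).liftQ L hker).comp S.quotKerEquivRange.symm.toLinearMap, ?_⟩
    intro v
    have : S.quotKerEquivRange.symm ⟨S v, v, rfl⟩ = (LinearMap.ker S).mkQ v :=
      LinearMap.quotKerEquivRange_symm_apply_image S v _
    simp [this]
  have N_hom : ∀ c : ℝ, 0 < c → ∀ φ : C(X, ℝ), (⨆ x : R, (c • φ) x) = c * ⨆ x : R, φ x := by
    intro c hc φ
    simp only [ContinuousMap.smul_apply, smul_eq_mul]
    rw [Real.mul_iSup_of_nonneg hc.le]
  have N_add : ∀ φ ψ : C(X, ℝ), (⨆ x : R, (φ + ψ) x) ≤ (⨆ x : R, φ x) + ⨆ x : R, ψ x := by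
    intro φ ψ
    apply ciSup_le
    intro x
    simp only [ContinuousMap.add_apply]
    exact add_le_add (le_ciSup (hbdd φ) x) (le_ciSup (hbdd ψ) x)
  have N_le : ∀ φ : LinearMap.range S, T φ ≤ ⨆ x : R, (φ : C(X, ℝ)) x := by
    rintro ⟨_, v, rfl⟩
    rw [hT]
    exact h _ _ fun x hx => le_ciSup (hbdd (S v)) ⟨x, hx⟩
  obtain ⟨g, hg1, hg2⟩ := exists_extension_of_le_sublinear ⟨LinearMap.range S, T⟩
    (fun φ : C(X, ℝ) => ⨆ x : R, φ x) N_hom N_add N_le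
  have hgle : ∀ (φ : C(X, ℝ)) (c : ℝ), (∀ x ∈ R, φ x ≤ c) → g φ ≤ c := fun φ c hc =>
    (hg2 φ).trans (ciSup_le fun x => hc x x.2)
  have hg0 : ∀ φ : C(X, ℝ), (∀ x, 0 ≤ φ x) → 0 ≤ g φ := by
    intro φ hφ
    have := hgle (-φ) 0 (by intro x _; simpa using hφ x)
    simpa using this
  let G : CompactlySupportedContinuousMap X ℝ →ₗ[ℝ] ℝ :=
    { toFun := fun f => g f.toContinuousMap
      map_add' := fun f f' => g.map_add f.toContinuousMap f'.toContinuousMap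
      map_smul' := fun c f => g.map_smul c f.toContinuousMap }
  let Λ : CompactlySupportedContinuousMap X ℝ →ₚ[ℝ] ℝ :=
    PositiveLinearMap.mk₀ G (fun f hf => hg0 _ hf)
  let π := RealRMK.rieszMeasure Λ
  have hint : ∀ φ : C(X, ℝ), ∫ x, φ x ∂π = g φ := fun φ =>
    RealRMK.integral_rieszMeasure Λ (CompactlySupportedContinuousMap.continuousMapEquiv φ)
  have : IsFiniteMeasure π := ⟨isCompact_univ.measure_lt_top⟩
  have h1 : g 1 = 1 := by
    apply le_antisymm
    · exact hgle _ _ (by simp)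
    · have := hgle (-1) (-1) (by simp)
      simp at this; exact this
  refine ⟨π, ⟨?_⟩, ?_, ?_⟩
  · have := hint 1
    simp [h1, Measure.real] at this
    rwa [ENNReal.toReal_eq_one_iff] at this
  · let d : C(X, ℝ) := ⟨fun x => Metric.infDist x R, Metric.continuous_infDist_pt R⟩
    have hd : ∫ x, d x ∂π = 0 := by
      apply le_antisymm
      · rw [hint]
        exact hgle _ _ fun x hx => (Metric.infDist_zero_of_mem hx).le
      · exact integral_nonneg fun x => Metric.infDist_nonneg
    have hd0 : (0 : X → ℝ) ≤ fun x => d x := fun x => Metric.infDist_nonneg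
    rw [integral_eq_zero_iff_of_nonneg hd0] at hd
    · filter_upwards [hd] with x hx
      exact (hR.mem_iff_infDist_zero hne).2 hx
    · exact d.continuous.integrable_of_hasCompactSupport (HasCompactSupport.of_compactSpace _)
  · intro v
    rw [hint, ← hT]
    exact hg1 ⟨S v, v, rfl⟩

theorem cube_embedding {E : Type*} [MetricSpace E] [SecondCountableTopology E] [Nonempty E] :
    ∃ i : E → (ℕ → unitInterval), IsEmbedding i := by
  let d := TopologicalSpace.denseSeq E
  let i : E → (ℕ → unitInterval) := fun x n => Set.projIcc 0 1 zero_le_one (dist x (d n))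
  have hc : Continuous i := by
    refine continuous_pi fun n => ?_
    exact continuous_projIcc.comp (by fun_prop)
  refine ⟨i, IsInducing.isEmbedding ?_⟩
  rw [isInducing_iff_nhds]
  intro x
  apply le_antisymm
  · exact hc.continuousAt.le_comap
  · rw [Metric.nhds_basis_ball.ge_iff]
    intro ε hε
    set δ := min (ε / 3) (1 / 3) with hδ
    have hδ0 : 0 < δ := by positivity
    obtain ⟨n, hn⟩ : ∃ n, dist x (d n) < δ := by
      simpa using (TopologicalSpace.denseRange_denseSeq E).exists_dist_lt x hδ0
    have hlt1 : δ ≤ ε / 3 := min_le_left _ _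
    have hlt2 : δ ≤ 1 / 3 := min_le_right _ _
    refine Filter.mem_comap.2 ⟨{z | (z n : ℝ) < 2 * δ}, ?_, ?_⟩
    · apply IsOpen.mem_nhds
      · exact isOpen_lt (by fun_prop) continuous_const
      · show ((Set.projIcc 0 1 zero_le_one (dist x (d n)) : Set.Icc (0:ℝ) 1) : ℝ) < 2 * δ
        rw [Set.coe_projIcc]
        refine max_lt (by linarith) ((min_le_right _ _).trans_lt (by linarith))
    · intro y hy
      change ((Set.projIcc 0 1 zero_le_one (dist y (d n)) : Set.Icc (0:ℝ) 1) : ℝ) < 2 * δ at hy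
      rw [Set.coe_projIcc] at hy
      have := (le_max_right _ _).trans_lt hy
      rw [min_lt_iff] at this
      rcases this with h | h
      · linarith
      · rw [Metric.mem_ball]
        have := dist_triangle_right y x (d n)
        linarith

theorem coupling_of_dual {E : Type*} [MetricSpace E] [PolishSpace E] [MeasurableSpace E] [BorelSpace E]
    {ι : Type} [Countable ι] (M : Set (ι → E)) (hM : IsClosed M)
    (μ : ι → Measure E) [∀ j, IsProbabilityMeasure (μ j)] [Nonempty E]
    (h : ∀ (s : Finset ι) (f : ι → BoundedContinuousFunction E ℝ) (c : ℝ),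
      (∀ x ∈ M, ∑ j ∈ s, f j (x j) ≤ c) → ∑ j ∈ s, ∫ y, f j y ∂(μ j) ≤ c) :
    ∃ (Ω : Type) (_ : MeasurableSpace Ω) (Pr : Measure Ω) (_ : IsProbabilityMeasure Pr)
      (Y : ι → Ω → E), (∀ j, Measurable (Y j)) ∧ (∀ j, Pr.map (Y j) = μ j) ∧
      ∀ᵐ ω ∂Pr, (fun j => Y j ω) ∈ M := by
  classical
  obtain ⟨i, hi⟩ := cube_embedding (E := E)
  have him : MeasurableEmbedding i := hi.continuous.measurableEmbedding hi.injective
  let J : (ι → E) → (ι → ℕ → unitInterval) := fun x j => i (x j)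
  have hJ : IsInducing J := IsInducing.piMap fun _ => hi.isInducing
  let S : (ι →₀ C(ℕ → unitInterval, ℝ)) →ₗ[ℝ] C(ι → ℕ → unitInterval, ℝ) :=
    Finsupp.lsum ℝ fun j =>
      { toFun := fun f => f.comp ⟨fun z => z j, by fun_prop⟩
        map_add' := fun _ _ => rfl
        map_smul' := fun _ _ => rfl }
  have hintg : ∀ (j : ι) (f : C(ℕ → unitInterval, ℝ)), Integrable (fun y => f (i y)) (μ j) := by
    intro j f
    exact (BoundedContinuousFunction.mkOfCompact f |>.compContinuous ⟨i, hi.continuous⟩).integrable _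
  let L : (ι →₀ C(ℕ → unitInterval, ℝ)) →ₗ[ℝ] ℝ :=
    Finsupp.lsum ℝ fun j =>
      { toFun := fun f => ∫ y, f (i y) ∂(μ j)
        map_add' := fun f g => integral_add (hintg j f) (hintg j g)
        map_smul' := fun c f => integral_const_mul c _ }
  have hdual : ∀ v c, (∀ x ∈ closure (Set.image J M), S v x ≤ c) → L v ≤ c := by
    intro v c hv
    have := h v.support (fun j => (BoundedContinuousFunction.mkOfCompact (v j)).compContinuous
      ⟨i, hi.continuous⟩) c ?_
    · simpa [L, Finsupp.lsum_apply, Finsupp.sum] using this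
    · intro x hx
      have := hv (J x) (subset_closure ⟨x, hx, rfl⟩)
      simpa [S, J, Finsupp.lsum_apply, Finsupp.sum] using this
  obtain ⟨π, hπ, hπR, hπS⟩ := hb_aux (closure (Set.image J M)) isClosed_closure S L hdual
  have hmarg : ∀ j, π.map (fun z => z j) = (μ j).map i := by
    intro j
    have : IsProbabilityMeasure (π.map (fun z : ι → ℕ → unitInterval => z j)) :=
      Measure.isProbabilityMeasure_map (measurable_pi_apply j).aemeasurable
    have : IsProbabilityMeasure ((μ j).map i) :=
      Measure.isProbabilityMeasure_map him.measurable.aemeasurable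
    apply ext_of_forall_integral_eq_of_IsFiniteMeasure
    intro f
    have := hπS (Finsupp.single j f.toContinuousMap)
    rw [integral_map (measurable_pi_apply j).aemeasurable f.continuous.aestronglyMeasurable,
      integral_map him.measurable.aemeasurable f.continuous.aestronglyMeasurable]
    have hS1 : S (Finsupp.single j f.toContinuousMap)
        = f.toContinuousMap.comp ⟨fun z => z j, by fun_prop⟩ := by
      simp only [S, Finsupp.lsum_single]
      rfl
    have hL1 : L (Finsupp.single j f.toContinuousMap) = ∫ y, f (i y) ∂(μ j) := by
      simp only [L, Finsupp.lsum_single]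
      rfl
    rw [hS1, hL1] at this
    exact this
  refine ⟨ι → ℕ → unitInterval, inferInstance, π, hπ, fun j z => him.invFun (z j), ?_, ?_, ?_⟩
  · intro j
    exact him.measurable_invFun.comp (measurable_pi_apply j)
  · intro j
    change π.map (him.invFun ∘ fun z => z j) = μ j
    rw [← Measure.map_map him.measurable_invFun (measurable_pi_apply j), hmarg,
      Measure.map_map him.measurable_invFun him.measurable]
    have : him.invFun ∘ i = id := funext him.leftInverse_invFun
    rw [this, Measure.map_id]
  · have hr : ∀ᵐ z ∂π, ∀ j, z j ∈ Set.range i := by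
      rw [ae_all_iff]
      intro j
      have : ∀ᵐ y ∂(π.map fun z => z j), y ∈ Set.range i := by
        rw [hmarg]
        exact (ae_map_iff him.measurable.aemeasurable him.measurableSet_range).2
          (ae_of_all _ fun y => ⟨y, rfl⟩)
      exact ae_of_ae_map (measurable_pi_apply j).aemeasurable this
    filter_upwards [hr, hπR] with z hz hzR
    choose x hx using hz
    have hzx : z = J x := funext fun j => (hx j).symm
    have : (fun j => him.invFun (z j)) = x := by
      funext j
      rw [← hx j]; exact him.leftInverse_invFun _
    rw [this]
    rw [hzx] at hzR
    rw [← hM.closure_eq, hJ.closure_eq_preimage_closure_image]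
    exact hzR

theorem dual_two {E : Type*} [MetricSpace E] [PolishSpace E] [MeasurableSpace E] [BorelSpace E]
    [PartialOrder E] [OrderClosedTopology E] (μ ν : Measure E) [IsProbabilityMeasure μ]
    [IsProbabilityMeasure ν] (hd : StochDom μ ν) (f g : BoundedContinuousFunction E ℝ) (c : ℝ)
    (h : ∀ x y : E, x ≤ y → f x + g y ≤ c) : ∫ x, f x ∂μ + ∫ y, g y ∂ν ≤ c := by
  have key : ∀ t : ℝ, μ {x | t ≤ f x + ‖f‖} ≤ ν {y | t ≤ c - g y + ‖f‖} := by
    intro t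
    have hcl : IsClosed {x | t ≤ f x + ‖f‖} :=
      isClosed_le continuous_const (by fun_prop)
    refine le_of_forall_lt fun r hr => ?_
    obtain ⟨A, hA, ⟨hAc, -⟩, hrA⟩ :=
      innerRegular_isCompact_isClosed_measurableSet_of_finite μ hcl.measurableSet r hr
    refine hrA.trans_le ?_
    let U : Set E := {y | ∃ x ∈ A, x ≤ y}
    have hUc : IsClosed U := by
      have : CompactSpace A := isCompact_iff_compactSpace.1 hAc
      have h1 : IsClosed {p : A × E | (p.1 : E) ≤ p.2} :=
        isClosed_le (by fun_prop) (by fun_prop)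
      have h2 := isClosedMap_snd_of_compactSpace _ h1
      convert h2 using 1
      ext y
      simp [U]
    have hUu : IsUpperSet U := by
      rintro a b hab ⟨x, hx, hxa⟩
      exact ⟨x, hx, hxa.trans hab⟩
    calc μ A ≤ μ U := measure_mono fun x hx => ⟨x, hx, le_rfl⟩
      _ ≤ ν U := hd U hUc.measurableSet hUu
      _ ≤ _ := by
        apply measure_mono
        rintro y ⟨x, hx, hxy⟩
        have h1 := h x y hxy
        have h2 : t ≤ f x + ‖f‖ := hA hx
        show t ≤ c - g y + ‖f‖
        linarith
  have hf0 : ∀ x, 0 ≤ f x + ‖f‖ := by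
    intro x
    have := f.norm_coe_le_norm x
    rw [Real.norm_eq_abs] at this
    have := neg_abs_le (f x)
    linarith
  have hg0 : ∀ x, 0 ≤ c - g x + ‖f‖ := by
    intro x
    have := hf0 x
    have := h x x le_rfl
    linarith
  have hfi : Integrable (fun x => f x + ‖f‖) μ := (f.integrable μ).add (integrable_const _)
  have hgi : Integrable (fun x => c - g x + ‖f‖) ν :=
    ((integrable_const _).sub (g.integrable ν)).add (integrable_const _)
  have hle : ∫⁻ x, ENNReal.ofReal (f x + ‖f‖) ∂μ ≤ ∫⁻ x, ENNReal.ofReal (c - g x + ‖f‖) ∂ν := by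
    rw [lintegral_eq_lintegral_meas_le μ (ae_of_all _ hf0) hfi.aemeasurable,
      lintegral_eq_lintegral_meas_le ν (ae_of_all _ hg0) hgi.aemeasurable]
    exact lintegral_mono fun t => key t
  have hge : ∫ x, (c - g x + ‖f‖) ∂ν = c - ∫ x, g x ∂ν + ‖f‖ := by
    have h1 : Integrable (fun x => c - g x) ν := (integrable_const _).sub (g.integrable ν)
    rw [integral_add h1 (integrable_const _), integral_sub (integrable_const _) (g.integrable ν)]
    simp
  rw [← ofReal_integral_eq_lintegral_ofReal hfi (ae_of_all _ hf0),
    ← ofReal_integral_eq_lintegral_ofReal hgi (ae_of_all _ hg0),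
    ENNReal.ofReal_le_ofReal_iff (integral_nonneg hg0),
    integral_add (f.integrable μ) (integrable_const _),
    hge] at hle
  simp at hle
  linarith

theorem strassen_kernel {E : Type*} [MetricSpace E] [PolishSpace E] [MeasurableSpace E] [BorelSpace E]
    [PartialOrder E] [OrderClosedTopology E] [Nonempty E] (μ ν : Measure E) [IsProbabilityMeasure μ]
    [IsProbabilityMeasure ν] (hd : StochDom μ ν) :
    ∃ κ : Kernel E E, IsMarkovKernel κ ∧ (μ ⊗ₘ κ).map Prod.snd = ν ∧
      ∀ᵐ p ∂(μ ⊗ₘ κ), p.1 ≤ p.2 := by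
  classical
  have hI : ∀ b : Bool, IsProbabilityMeasure ((fun b => if b then ν else μ : Bool → Measure E) b) := by
    rintro (_ | _) <;> simp <;> infer_instance
  have hdual : ∀ (s : Finset Bool) (f : Bool → BoundedContinuousFunction E ℝ) (c : ℝ),
      (∀ x ∈ {x : Bool → E | x false ≤ x true}, ∑ j ∈ s, f j (x j) ≤ c) →
      ∑ j ∈ s, ∫ y, f j y ∂((fun b => if b then ν else μ : Bool → Measure E) j) ≤ c := by
    intro s f c hs
    have := dual_two μ ν hd (if false ∈ s then f false else 0) (if true ∈ s then f true else 0) c ?_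
    · have e : ∑ j ∈ s, ∫ y, f j y ∂((fun b => if b then ν else μ : Bool → Measure E) j)
          = ∑ j, if j ∈ s then ∫ y, f j y ∂((fun b => if b then ν else μ : Bool → Measure E) j) else 0 := by
        rw [Finset.sum_ite_mem, Finset.univ_inter]
      rw [e, Fintype.sum_bool, add_comm]
      refine le_trans (le_of_eq ?_) this
      congr 1 <;> split_ifs <;> simp
    · intro x y hxy
      have := hs (fun b => if b then y else x) (by simpa using hxy)
      have e : ∑ j ∈ s, f j ((fun b => if b then y else x : Bool → E) j)
          = ∑ j, if j ∈ s then f j ((fun b => if b then y else x : Bool → E) j) else 0 := by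
        rw [Finset.sum_ite_mem, Finset.univ_inter]
      rw [e, Fintype.sum_bool, add_comm] at this
      refine le_trans (le_of_eq ?_) this
      congr 1 <;> split_ifs <;> simp
  obtain ⟨Ω, mΩ, Pr, hPr, Y, hY, hYm, hYM⟩ := coupling_of_dual
    {x : Bool → E | x false ≤ x true} (isClosed_le (by fun_prop) (by fun_prop))
    (fun b => if b then ν else μ) hdual
  refine ⟨condDistrib (Y true) (Y false) Pr, inferInstance, ?_⟩
  have h0 := hYm false
  have h1 := hYm true
  simp only [Bool.false_eq_true, if_false, if_true] at h0 h1
  have := compProd_map_condDistrib (mβ := inferInstance) (μ := Pr) (X := Y false) (hY true).aemeasurable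
  rw [h0] at this
  rw [this]
  constructor
  · rw [Measure.map_map measurable_snd ((hY false).prodMk (hY true))]
    exact h1
  · rw [ae_map_iff ((hY false).prodMk (hY true)).aemeasurable]
    · exact hYM
    · exact (isClosed_le continuous_fst continuous_snd).measurableSet

universe u

theorem finite_chain {E : Type u} [MetricSpace E] [PolishSpace E] [MeasurableSpace E] [BorelSpace E]
    [PartialOrder E] [OrderClosedTopology E] [Nonempty E] (ν : ℕ → Measure E)
    [∀ i, IsProbabilityMeasure (ν i)] (hd : ∀ i, StochDom (ν i) (ν (i + 1))) (n : ℕ) :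
    ∃ (Ω : Type u) (_ : MeasurableSpace Ω) (Pr : Measure Ω) (_ : IsProbabilityMeasure Pr)
      (X : ℕ → Ω → E), (∀ i, Measurable (X i)) ∧ (∀ i ≤ n, Pr.map (X i) = ν i) ∧
      ∀ᵐ ω ∂Pr, ∀ i < n, X i ω ≤ X (i + 1) ω := by
  induction n with
  | zero =>
    refine ⟨E, inferInstance, ν 0, inferInstance, fun _ => id, fun _ => measurable_id, ?_, ?_⟩
    · intro i hi
      obtain rfl : i = 0 := by omega
      exact Measure.map_id
    · simp
  | succ n ih =>
    obtain ⟨Ω, mΩ, Pr, hPr, X, hX, hXm, hXle⟩ := ih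
    obtain ⟨κ, hκ, hsnd, hle⟩ := strassen_kernel (ν n) (ν (n + 1)) (hd n)
    let Q : Measure (Ω × E) := Pr ⊗ₘ (κ.comap (X n) (hX n))
    have hmeas : Measurable fun p : Ω × E => (X n p.1, p.2) :=
      ((hX n).comp measurable_fst).prodMk measurable_snd
    have hpair : Q.map (fun p : Ω × E => (X n p.1, p.2)) = ν n ⊗ₘ κ := by
      ext s hs
      rw [Measure.map_apply hmeas hs, Measure.compProd_apply (hmeas hs), Measure.compProd_apply hs,
        ← hXm n le_rfl, lintegral_map (Kernel.measurable_kernel_prodMk_left hs) (hX n)]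
      rfl
    have hfst : Q.map Prod.fst = Pr := Measure.fst_compProd _ _
    refine ⟨Ω × E, inferInstance, Q, inferInstance,
      fun i p => if i ≤ n then X i p.1 else p.2, ?_, ?_, ?_⟩
    · intro i
      by_cases hi : i ≤ n
      · simp only [hi, if_true]; exact (hX i).comp measurable_fst
      · simp only [hi, if_false]; exact measurable_snd
    · intro i hi
      by_cases hin : i ≤ n
      · simp only [hin, if_true]
        have : (fun p : Ω × E => X i p.1) = X i ∘ Prod.fst := rfl
        rw [this, ← Measure.map_map (hX i) measurable_fst, hfst, hXm i hin]
      · obtain rfl : i = n + 1 := by omega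
        simp only [hin, if_false]
        rw [← hsnd, ← hpair, Measure.map_map measurable_snd hmeas]
        rfl
    · have h1 : ∀ᵐ p ∂Q, ∀ i < n, X i p.1 ≤ X (i + 1) p.1 := by
        rw [← hfst] at hXle
        exact ae_of_ae_map measurable_fst.aemeasurable hXle
      have h2 : ∀ᵐ p ∂Q, X n p.1 ≤ p.2 := by
        rw [← hpair] at hle
        exact ae_of_ae_map hmeas.aemeasurable hle
      filter_upwards [h1, h2] with p hp1 hp2 i hi
      by_cases hin : i < n
      · simp only [hin.le, Nat.succ_le_of_lt hin, if_true]
        exact hp1 i hin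
      · obtain rfl : i = n := by omega
        simpa using hp2

/-- If `μ₁ ⪯ μ₂ ⪯ …` is increasing in stochastic order and `μᵢ ⪯ μ` for all
`i`, then on some common probability space there are random variables `X, X₁, X₂, …`
with laws `μ, μ₁, μ₂, …` such that `X₁ ⪯ X₂ ⪯ … ⪯ X` almost surely. -/
theorem stmt2 {E : Type*} [MetricSpace E] [PolishSpace E] [MeasurableSpace E] [BorelSpace E]
    [PartialOrder E] [OrderClosedTopology E]
    (μ : Measure E) (μs : ℕ → Measure E)
    [IsProbabilityMeasure μ] [∀ i, IsProbabilityMeasure (μs i)]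
    (hmono : ∀ i, StochDom (μs i) (μs (i + 1)))
    (hbdd : ∀ i, StochDom (μs i) μ) :
    ∃ (Ω : Type) (_ : MeasurableSpace Ω) (Pr : Measure Ω) (_ : IsProbabilityMeasure Pr)
      (X : Ω → E) (Xs : ℕ → Ω → E),
      Measurable X ∧ (∀ i, Measurable (Xs i)) ∧
      Pr.map X = μ ∧ (∀ i, Pr.map (Xs i) = μs i) ∧
      (∀ᵐ ω ∂Pr, (∀ i, Xs i ω ≤ Xs (i + 1) ω) ∧ ∀ i, Xs i ω ≤ X ω) := by
  classical
  have hne : Nonempty E := by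
    by_contra hcon
    rw [not_nonempty_iff] at hcon
    have := measure_univ (μ := μ)
    rw [Set.univ_eq_empty_iff.2 hcon] at this
    simp at this
  let m : Option ℕ → Measure E := fun o => o.elim μ μs
  have hm : ∀ o, IsProbabilityMeasure (m o) := by
    rintro (_ | i)
    · exact ‹IsProbabilityMeasure μ›
    · exact ‹∀ i, IsProbabilityMeasure (μs i)› i
  let M : Set (Option ℕ → E) :=
    {x | (∀ i, x (some i) ≤ x (some (i + 1))) ∧ ∀ i, x (some i) ≤ x none}
  have hM : IsClosed M := by
    have : M = (⋂ i, {x | x (some i) ≤ x (some (i + 1))}) ∩ ⋂ i, {x | x (some i) ≤ x none} := by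
      ext x; simp [M]
    rw [this]
    exact (isClosed_iInter fun i => isClosed_le (by fun_prop) (by fun_prop)).inter
      (isClosed_iInter fun i => isClosed_le (by fun_prop) (by fun_prop))
  have hdual : ∀ (s : Finset (Option ℕ)) (f : Option ℕ → BoundedContinuousFunction E ℝ) (c : ℝ),
      (∀ x ∈ M, ∑ j ∈ s, f j (x j) ≤ c) → ∑ j ∈ s, ∫ y, f j y ∂(m j) ≤ c := by
    intro s f c hs
    obtain ⟨n, hn⟩ : ∃ n : ℕ, ∀ i, some i ∈ s → i ≤ n := by
      refine ⟨s.sup fun o => o.elim 0 id, fun i hi => ?_⟩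
      exact Finset.le_sup (f := fun o : Option ℕ => o.elim 0 id) hi
    let ν : ℕ → Measure E := fun k => if k ≤ n then μs k else μ
    have hν : ∀ k, IsProbabilityMeasure (ν k) := by
      intro k
      by_cases hk : k ≤ n <;> simp only [ν, hk, if_true, if_false] <;> infer_instance
    have hνd : ∀ k, StochDom (ν k) (ν (k + 1)) := by
      intro k
      by_cases hk : k + 1 ≤ n
      · have hk' : k ≤ n := by omega
        simp only [ν, hk, hk', if_true]; exact hmono k
      · by_cases hk' : k ≤ n
        · simp only [ν, hk, hk', if_true, if_false]; exact hbdd k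
        · simp only [ν, hk, hk', if_false]; exact fun _ _ _ => le_rfl
    obtain ⟨Ω, mΩ, Pr, hPr, X, hX, hXm, hXle⟩ := finite_chain ν hνd (n + 1)
    let Y : Option ℕ → Ω → E := fun o => X (min (o.elim (n + 1) id) (n + 1))
    have hYM : ∀ᵐ ω ∂Pr, (fun o => Y o ω) ∈ M := by
      filter_upwards [hXle] with ω hω
      have hmn : Monotone fun k => X (min k (n + 1)) ω := by
        apply monotone_nat_of_le_succ
        intro k
        by_cases hk : k < n + 1
        · have h1 : min k (n + 1) = k := by omega
          have h2 : min (k + 1) (n + 1) = k + 1 := by omega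
          rw [h1, h2]; exact hω k hk
        · have h1 : min k (n + 1) = n + 1 := by omega
          have h2 : min (k + 1) (n + 1) = n + 1 := by omega
          rw [h1, h2]
      refine ⟨fun i => hmn (Nat.le_succ i), fun i => ?_⟩
      show X (min i (n + 1)) ω ≤ X (min (n + 1) (n + 1)) ω
      rw [min_self]
      have := hmn (le_max_left i (n + 1))
      simpa using this
    have hYm : ∀ o ∈ s, Pr.map (Y o) = m o := by
      rintro (_ | i) ho
      · have := hXm (n + 1) le_rfl
        simpa [Y, m, ν] using this
      · have hi := hn i ho
        have h1 : min i (n + 1) = i := by omega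
        have := hXm i (by omega)
        simpa [Y, m, ν, h1, hi] using this
    have hint : ∀ o, Integrable (fun ω => f o (Y o ω)) Pr := by
      intro o
      have hb : ∀ᵐ ω ∂Pr, ‖f o (Y o ω)‖ ≤ ‖f o‖ := ae_of_all _ fun ω => (f o).norm_coe_le_norm _
      exact Integrable.of_bound
        ((f o).continuous.measurable.comp (hX _)).aestronglyMeasurable _ hb
    have e : ∑ o ∈ s, ∫ y, f o y ∂(m o) = ∫ ω, ∑ o ∈ s, f o (Y o ω) ∂Pr := by
      rw [integral_finsetSum _ fun o _ => hint o]
      refine Finset.sum_congr rfl fun o ho => ?_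
      rw [← hYm o ho, integral_map (hX _).aemeasurable (f o).continuous.aestronglyMeasurable]
    rw [e]
    calc ∫ ω, ∑ o ∈ s, f o (Y o ω) ∂Pr ≤ ∫ _, c ∂Pr :=
          integral_mono_ae (integrable_finsetSum _ fun o _ => hint o) (integrable_const c)
            (hYM.mono fun ω hω => hs _ hω)
      _ = c := by simp
  obtain ⟨Ω, mΩ, Pr, hPr, Y, hY, hYm, hYM⟩ := coupling_of_dual M hM m hdual
  exact ⟨Ω, mΩ, Pr, hPr, Y none, fun i => Y (some i), hY none, fun i => hY _, hYm none,
      fun i => hYm (some i), hYM⟩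
end

section
/- Let E be an ordered Polish space with the property (BMC) that every increasing sequence x₁ ⪯ x₂ ⪯ … in E that is bounded above by some y ∈ E converges in E. Then the analogous property holds for probability measures: if μ₁ ⪯ μ₂ ⪯ … is a sequence of Borel probability measures on E, increasing in stochastic order and bounded above in stochastic order by a probability measure λ, then there exists a probability measure μ to which the sequence converges weakly. -/
open MeasureTheory ProbabilityTheory Filter Topology

lemma aux_ind (M x : ℝ) (h1 : -M ≤ x) (h2 : x ≤ M) :
    IntervalIntegrable (fun t => if t < x then (1:ℝ) else 0) volume (-M) M ∧
    ∫ t in (-M)..M, (if t < x then (1:ℝ) else 0) = x + M := by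
  have i1 : IntervalIntegrable (fun t => if t < x then (1:ℝ) else 0) volume (-M) x := by
    apply (intervalIntegrable_const (c := (1:ℝ))).congr_ae
    rw [Set.uIoc_of_le h1, Filter.EventuallyEq, ae_restrict_iff' measurableSet_Ioc]
    have : ∀ᵐ t : ℝ, t ≠ x := by simp [ae_iff]
    filter_upwards [this] with t ht hm
    rw [if_pos (lt_of_le_of_ne hm.2 ht)]
  have i2 : IntervalIntegrable (fun t => if t < x then (1:ℝ) else 0) volume x M := by
    apply (intervalIntegrable_const (c := (0:ℝ))).congr
    rw [Set.uIoc_of_le h2]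
    intro t ht
    simp [not_lt.2 ht.1.le]
  refine ⟨i1.trans i2, ?_⟩
  rw [← intervalIntegral.integral_add_adjacent_intervals i1 i2]
  have e1 : ∫ t in (-M)..x, (if t < x then (1:ℝ) else 0) = ∫ t in (-M)..x, (1:ℝ) := by
    apply intervalIntegral.integral_congr_ae
    have : ∀ᵐ t : ℝ, t ≠ x := by simp [ae_iff]
    filter_upwards [this] with t ht hm
    rw [Set.uIoc_of_le h1] at hm
    rw [if_pos (lt_of_le_of_ne hm.2 ht)]
  have e2 : ∫ t in x..M, (if t < x then (1:ℝ) else 0) = ∫ t in x..M, (0:ℝ) := by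
    apply intervalIntegral.integral_congr
    intro t ht
    rw [Set.uIcc_of_le h2] at ht
    simp [not_lt.2 ht.1]
  rw [e1, e2]; simp

lemma aux_key {γ : Type*} [Fintype γ] (M : ℝ) (a : γ → ℝ) (α : γ → ℝ) (sa : ∑ i, a i = 1)
    (hα : ∀ i, |α i| ≤ M) :
    IntervalIntegrable (fun t => ∑ i, a i * (if t < α i then (1:ℝ) else 0)) volume (-M) M ∧
    ∫ t in (-M)..M, ∑ i, a i * (if t < α i then (1:ℝ) else 0) = ∑ i, a i * α i + M := by
  have hI : ∀ i, IntervalIntegrable (fun t => a i * (if t < α i then (1:ℝ) else 0)) volume (-M) M :=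
    fun i => (aux_ind M (α i) (abs_le.1 (hα i)).1 (abs_le.1 (hα i)).2).1.const_mul _
  constructor
  · have := IntervalIntegrable.sum Finset.univ (fun i _ => hI i)
    simpa [Finset.sum_fn] using this
  · rw [intervalIntegral.integral_finsetSum (fun i _ => hI i)]
    have : ∀ i, ∫ t in (-M)..M, a i * (if t < α i then (1:ℝ) else 0) = a i * α i + a i * M := by
      intro i
      rw [intervalIntegral.integral_const_mul,
        (aux_ind M (α i) (abs_le.1 (hα i)).1 (abs_le.1 (hα i)).2).2]; ring
    simp only [this, Finset.sum_add_distrib, ← Finset.sum_mul, sa, one_mul]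

open Classical in
lemma aux_layer {ι κ : Type*} [Fintype ι] [Fintype κ] (a : ι → ℝ) (b : κ → ℝ)
    (hb : ∀ j, 0 ≤ b j) (sa : ∑ i, a i = 1) (sb : ∑ j, b j = 1) (r : ι → κ → Prop)
    (hall : ∀ S : Finset ι, ∑ i ∈ S, a i ≤ ∑ j with ∃ i ∈ S, r i j, b j)
    (α : ι → ℝ) (w : κ → ℝ) (h : ∀ i j, r i j → α i ≤ w j) :
    ∑ i, a i * α i ≤ ∑ j, b j * w j := by
  set M : ℝ := ∑ i, |α i| + ∑ j, |w j| with hM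
  have hα : ∀ i, |α i| ≤ M := fun i => by
    have h1 := Finset.single_le_sum (f := fun i => |α i|) (fun i _ => abs_nonneg _) (Finset.mem_univ i)
    have h2 : 0 ≤ ∑ j, |w j| := Finset.sum_nonneg fun _ _ => abs_nonneg _
    linarith
  have hw : ∀ i, |w i| ≤ M := fun i => by
    have h1 := Finset.single_le_sum (f := fun i => |w i|) (fun i _ => abs_nonneg _) (Finset.mem_univ i)
    have h2 : 0 ≤ ∑ j, |α j| := Finset.sum_nonneg fun _ _ => abs_nonneg _
    linarith
  have hM0 : 0 ≤ M := by positivity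
  obtain ⟨I1, E1⟩ := aux_key M a α sa hα
  obtain ⟨I2, E2⟩ := aux_key M b w sb hw
  have : ∫ t in (-M)..M, ∑ i, a i * (if t < α i then (1:ℝ) else 0)
      ≤ ∫ t in (-M)..M, ∑ i, b i * (if t < w i then (1:ℝ) else 0) := by
    apply intervalIntegral.integral_mono_on (by linarith) I1 I2
    intro t _
    simp only [mul_ite, mul_one, mul_zero]
    rw [← Finset.sum_filter, ← Finset.sum_filter]
    refine (hall _).trans ?_
    apply Finset.sum_le_sum_of_subset_of_nonneg
    · intro j hj
      simp only [Finset.mem_filter, Finset.mem_univ, true_and] at hj ⊢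
      obtain ⟨i, hi, hr⟩ := hj
      exact hi.trans_le (h i j hr)
    · intro j _ _; exact hb j
  linarith

open Classical in
lemma finite_strassen {ι κ : Type*} [Fintype ι] [Fintype κ] (a : ι → ℝ) (b : κ → ℝ)
    (hb : ∀ j, 0 ≤ b j) (sa : ∑ i, a i = 1) (sb : ∑ j, b j = 1) (r : ι → κ → Prop)
    (hall : ∀ S : Finset ι, ∑ i ∈ S, a i ≤ ∑ j with ∃ i ∈ S, r i j, b j) :
    ∃ p : ι → κ → ℝ, (∀ i j, 0 ≤ p i j) ∧ (∀ i j, p i j ≠ 0 → r i j) ∧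
      (∀ i, ∑ j, p i j = a i) ∧ (∀ j, ∑ i, p i j = b j) := by
  let T : (ι × κ → ℝ) →ₗ[ℝ] (ι → ℝ) × (κ → ℝ) :=
    { toFun := fun p => (fun i => ∑ j, p (i, j), fun j => ∑ i, p (i, j))
      map_add' := by
        intro p q; ext <;> simp [Finset.sum_add_distrib]
      map_smul' := by
        intro c q; ext <;> simp [Finset.mul_sum] }
  let C : Set (ι × κ → ℝ) := stdSimplex ℝ (ι × κ) ∩ {p | ∀ i j, ¬ r i j → p (i, j) = 0}
  have hCconv : Convex ℝ C := by
    apply (convex_stdSimplex ℝ _).inter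
    intro p hp q hq s t hs ht hst i j hij
    simp [hp i j hij, hq i j hij]
  have hCcomp : IsCompact C := by
    apply (isCompact_stdSimplex ℝ _).inter_right
    have : {p : ι × κ → ℝ | ∀ i j, ¬ r i j → p (i, j) = 0}
      = ⋂ i, ⋂ j, ⋂ (_ : ¬ r i j), {p | p (i, j) = 0} := by ext; simp
    rw [this]
    exact isClosed_iInter fun i => isClosed_iInter fun j => isClosed_iInter fun _ =>
      isClosed_eq (continuous_apply _) continuous_const
  by_cases hmem : (a, b) ∈ T '' C
  · obtain ⟨p, ⟨hp1, hp2⟩, hp3⟩ := hmem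
    refine ⟨fun i j => p (i, j), fun i j => hp1.1 _, fun i j h => ?_, fun i => ?_, fun j => ?_⟩
    · by_contra hr; exact h (hp2 i j hr)
    · exact congrFun (congrArg Prod.fst hp3) i
    · exact congrFun (congrArg Prod.snd hp3) j
  · exfalso
    obtain ⟨f, u, hu1, hu2⟩ := geometric_hahn_banach_closed_point
      (hCconv.linear_image T) ((hCcomp.image T.continuous_of_finiteDimensional).isClosed) hmem
    set α : ι → ℝ := fun i => f (Pi.single i 1, 0) with hα
    set β : κ → ℝ := fun j => f (0, Pi.single j 1) with hβ
    have hs1 : ∀ i : ι, (Pi.single i 1 : ι → ℝ) = fun j => if i = j then 1 else 0 := by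
      intro i; ext j; simp [Pi.single_apply, eq_comm]
    have hs2 : ∀ i : κ, (Pi.single i 1 : κ → ℝ) = fun j => if i = j then 1 else 0 := by
      intro i; ext j; simp [Pi.single_apply, eq_comm]
    have hf : ∀ x y, f (x, y) = ∑ i, x i * α i + ∑ j, y j * β j := by
      intro x y
      have e1 : f (x, 0) = ∑ i, x i * α i := by
        have := LinearMap.pi_apply_eq_sum_univ ((f : _ →ₗ[ℝ] ℝ).comp (LinearMap.inl ℝ (ι → ℝ) (κ → ℝ))) x
        simpa [hα, hs1] using this
      have e2 : f (0, y) = ∑ i, y i * β i := by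
        have := LinearMap.pi_apply_eq_sum_univ ((f : _ →ₗ[ℝ] ℝ).comp (LinearMap.inr ℝ (ι → ℝ) (κ → ℝ))) y
        simpa [hβ, hs2] using this
      rw [← e1, ← e2, ← map_add]; simp
    have hr : ∀ i j, r i j → α i ≤ u - β j := by
      intro i j hij
      have := hu1 (T (Pi.single (i, j) 1)) ⟨_, ⟨single_mem_stdSimplex ℝ _, ?_⟩, rfl⟩
      · have e : T (Pi.single (i, j) 1) = (Pi.single i 1, Pi.single j 1) := by
          ext k
          · by_cases hk : k = i
            · simp only [T, LinearMap.coe_mk, AddHom.coe_mk, hk, Pi.single_apply, Prod.mk.injEq,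
                true_and]
              rw [Finset.sum_ite_eq']; simp
            · simp [T, Pi.single_apply, hk]
          · by_cases hk : k = j
            · simp only [T, LinearMap.coe_mk, AddHom.coe_mk, hk, Pi.single_apply, Prod.mk.injEq,
                and_true]
              rw [Finset.sum_ite_eq']; simp
            · simp [T, Pi.single_apply, hk]
        rw [e, hf] at this
        simp [Pi.single_apply] at this
        linarith
      · intro i' j' h'
        rw [Pi.single_apply, if_neg]
        rintro h; cases h; exact h' hij
    have := aux_layer a b hb sa sb r hall α (fun j => u - β j) hr
    rw [hf] at hu2
    simp only [mul_sub, Finset.sum_sub_distrib, ← Finset.sum_mul, sb] at this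
    linarith

lemma aux_inner {Y κ : Type*} [MeasurableSpace Y] [Fintype κ] [MeasurableSpace κ]
    [MeasurableSingletonClass κ] (ν : Measure Y) [IsProbabilityMeasure ν] (d : Y → κ)
    (hd : Measurable d) (p : κ → ℝ) (hp : ∀ j, 0 ≤ p j) (a : ℝ) (ha : 0 < a)
    (hsum : ∑ j, p j = a) (hz : ∀ j, ν.real (d ⁻¹' {j}) = 0 → p j = 0) :
    ∫⁻ y, ENNReal.ofReal (p (d y) / (a * ν.real (d ⁻¹' {d y}))) ∂ν = 1 := by
  rw [← lintegral_map (f := fun j => ENNReal.ofReal (p j / (a * ν.real (d ⁻¹' {j}))))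
    (measurable_of_finite _) hd, lintegral_fintype]
  have : ∀ j, ENNReal.ofReal (p j / (a * ν.real (d ⁻¹' {j}))) * (ν.map d) {j}
      = ENNReal.ofReal (p j / a) := by
    intro j
    rw [Measure.map_apply hd (measurableSet_singleton j), ← ofReal_measureReal,
      ← ENNReal.ofReal_mul (div_nonneg (hp j) (mul_nonneg ha.le measureReal_nonneg))]
    congr 1
    by_cases h : ν.real (d ⁻¹' {j}) = 0
    · simp [hz j h]
    · field_simp
  simp only [this]
  rw [← ENNReal.ofReal_sum_of_nonneg (fun j _ => div_nonneg (hp j) ha.le), ← Finset.sum_div, hsum,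
    div_self ha.ne', ENNReal.ofReal_one]

lemma aux_ae {Y κ : Type*} [MeasurableSpace Y] [Fintype κ] [MeasurableSpace κ]
    [MeasurableSingletonClass κ] (ν : Measure Y) [IsProbabilityMeasure ν] (d : Y → κ) :
    ∀ᵐ y ∂ν, 0 < ν.real (d ⁻¹' {d y}) := by
  have : {y | ¬ 0 < ν.real (d ⁻¹' {d y})} ⊆ ⋃ j ∈ {j | ν (d ⁻¹' {j}) = 0}, d ⁻¹' {j} := by
    intro y hy
    simp only [Set.mem_ofPred_eq, not_lt] at hy
    have h0 := le_antisymm hy measureReal_nonneg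
    rw [measureReal_eq_zero_iff] at h0
    simp only [Set.mem_iUnion]
    exact ⟨d y, h0, rfl⟩
  refine measure_mono_null this ?_
  rw [measure_biUnion_null_iff (Set.to_countable _)]
  exact fun j hj => hj

lemma cell_coupling {X Y ι κ : Type*} [MeasurableSpace X] [MeasurableSpace Y]
    [Fintype ι] [Fintype κ] [MeasurableSpace ι] [MeasurableSpace κ]
    [MeasurableSingletonClass ι] [MeasurableSingletonClass κ]
    (μ : Measure X) (ν : Measure Y) [IsProbabilityMeasure μ] [IsProbabilityMeasure ν]
    (c : X → ι) (d : Y → κ) (hc : Measurable c) (hd : Measurable d) (r : ι → κ → Prop)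
    (hall : ∀ S : Set ι, μ (c ⁻¹' S) ≤ ν (d ⁻¹' {j | ∃ i ∈ S, r i j})) :
    ∃ π : Measure (X × Y), π.map Prod.fst = μ ∧ π.map Prod.snd = ν ∧
      ∀ᵐ q ∂π, r (c q.1) (d q.2) := by
  classical
  obtain ⟨p, hp0, hpr, hpa, hpb⟩ := finite_strassen (fun i => μ.real (c ⁻¹' {i}))
    (fun j => ν.real (d ⁻¹' {j})) (fun j => measureReal_nonneg)
    (by rw [sum_measureReal_preimage_singleton _ (fun i _ => hc (measurableSet_singleton i))]; simp)
    (by rw [sum_measureReal_preimage_singleton _ (fun i _ => hd (measurableSet_singleton i))]; simp)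
    r (by
      intro S
      rw [sum_measureReal_preimage_singleton _ (fun i _ => hc (measurableSet_singleton i)),
        sum_measureReal_preimage_singleton _ (fun i _ => hd (measurableSet_singleton i))]
      have := hall (S : Set ι)
      simp only [Finset.coe_filter, Finset.mem_univ, true_and]
      exact ENNReal.toReal_mono (measure_ne_top _ _) (by simpa using this))
  have hza : ∀ i j, μ.real (c ⁻¹' {i}) = 0 → p i j = 0 := by
    intro i j h
    rw [← hpa i] at h
    exact (Finset.sum_eq_zero_iff_of_nonneg (fun j _ => hp0 i j)).1 h j (Finset.mem_univ _)
  have hzb : ∀ i j, ν.real (d ⁻¹' {j}) = 0 → p i j = 0 := by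
    intro i j h
    rw [← hpb j] at h
    exact (Finset.sum_eq_zero_iff_of_nonneg (fun i _ => hp0 i j)).1 h i (Finset.mem_univ _)
  let h : ι × κ → ENNReal := fun q =>
    ENNReal.ofReal (p q.1 q.2 / (μ.real (c ⁻¹' {q.1}) * ν.real (d ⁻¹' {q.2})))
  have hcd : Measurable (fun q : X × Y => (c q.1, d q.2)) := by fun_prop
  have hm : Measurable (fun q : X × Y => h (c q.1, d q.2)) := (measurable_of_finite h).comp hcd
  refine ⟨(μ.prod ν).withDensity (fun q => h (c q.1, d q.2)), ?_, ?_, ?_⟩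
  · ext A hA
    rw [Measure.map_apply measurable_fst hA, withDensity_apply _ (measurable_fst hA),
      ← lintegral_indicator (measurable_fst hA), lintegral_prod _ (hm.indicator (measurable_fst hA)).aemeasurable]
    have : ∀ᵐ x ∂μ, ∫⁻ y, (Prod.fst ⁻¹' A).indicator (fun q : X × Y => h (c q.1, d q.2)) (x, y) ∂ν
        = A.indicator 1 x := by
      filter_upwards [aux_ae μ c] with x hx
      by_cases hxA : x ∈ A
      · simp only [Set.indicator, Set.mem_preimage, hxA, if_true]
        exact aux_inner ν d hd (p (c x)) (hp0 _) _ hx (hpa _) (hzb _)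
      · simp [Set.indicator, hxA]
    rw [lintegral_congr_ae this, lintegral_indicator_one hA]
  · ext A hA
    rw [Measure.map_apply measurable_snd hA, withDensity_apply _ (measurable_snd hA),
      ← lintegral_indicator (measurable_snd hA), lintegral_prod_symm _ (hm.indicator (measurable_snd hA)).aemeasurable]
    have : ∀ᵐ y ∂ν, ∫⁻ x, (Prod.snd ⁻¹' A).indicator (fun q : X × Y => h (c q.1, d q.2)) (x, y) ∂μ
        = A.indicator 1 y := by
      filter_upwards [aux_ae ν d] with y hy
      by_cases hyA : y ∈ A
      · simp only [Set.indicator, Set.mem_preimage, hyA, if_true]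
        have := aux_inner μ c hc (fun i => p i (d y)) (fun i => hp0 _ _) _ hy (hpb _) (fun i => hza i _)
        simpa [h, mul_comm] using this
      · simp [Set.indicator, hyA]
    rw [lintegral_congr_ae this, lintegral_indicator_one hA]
  · rw [ae_withDensity_iff hm]
    refine Eventually.of_forall fun q hq => hpr _ _ ?_
    intro h0
    exact hq (by simp [h, h0])

lemma isClosed_up {E : Type*} [TopologicalSpace E] [PartialOrder E] [OrderClosedTopology E]
    {K : Set E} (hK : IsCompact K) : IsClosed {y | ∃ x ∈ K, x ≤ y} := by
  have : {y | ∃ x ∈ K, x ≤ y} = Prod.snd '' ((Prod.fst : K × E → K) ⁻¹' Set.univ ∩ {q : K × E | (q.1 : E) ≤ q.2}) := by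
    ext y; simp
  rw [this]
  have := isCompact_iff_compactSpace.1 hK
  apply isClosedMap_snd_of_compactSpace
  simp only [Set.preimage_univ, Set.univ_inter]
  exact isClosed_le (by fun_prop) (by fun_prop)

lemma isUpper_up {E : Type*} [PartialOrder E] {K : Set E} : IsUpperSet {y | ∃ x ∈ K, x ≤ y} := by
  rintro a b hab ⟨x, hx, hxa⟩
  exact ⟨x, hx, hxa.trans hab⟩

lemma stoch_strassen {E : Type*} [MetricSpace E] [PolishSpace E] [MeasurableSpace E] [BorelSpace E]
    [PartialOrder E] [OrderClosedTopology E]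
    (μ ν : Measure E) [IsProbabilityMeasure μ] [IsProbabilityMeasure ν] (h : StochDom μ ν) :
    ∃ π : Measure (E × E), π.map Prod.fst = μ ∧ π.map Prod.snd = ν ∧ ∀ᵐ q ∂π, q.1 ≤ q.2 := by
  classical
  obtain ⟨B, hB⟩ : ∃ B : ℕ → Set E, TopologicalSpace.countableBasis E = Set.range B :=
    (TopologicalSpace.countable_countableBasis E).exists_eq_range
      (by
        obtain ⟨x⟩ : Nonempty E := nonempty_of_isProbabilityMeasure μ
        obtain ⟨u, hu, -⟩ := (TopologicalSpace.isBasis_countableBasis E).exists_subset_of_mem_open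
          (Set.mem_univ x) isOpen_univ
        exact ⟨u, hu⟩)
  have hBo : ∀ i, IsOpen (B i) := fun i =>
    TopologicalSpace.isOpen_of_mem_countableBasis (by rw [hB]; exact ⟨i, rfl⟩)
  have step : ∀ n : ℕ, ∃ π : Measure (E × E), π.map Prod.fst = μ ∧ π.map Prod.snd = ν ∧
      ∀ i < n, ∀ j < n, (∀ x ∈ B i, ∀ y ∈ B j, ¬ x ≤ y) → π (B i ×ˢ B j) = 0 := by
    intro n
    let c : E → (Fin n → Prop) := fun x i => x ∈ B i
    have hc : Measurable c := measurable_pi_lambda _ fun i => (hBo i).measurableSet.mem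
    let r : (Fin n → Prop) → (Fin n → Prop) → Prop := fun s t =>
      ∀ i j : Fin n, s i → t j → ∃ x ∈ B i, ∃ y ∈ B j, x ≤ y
    obtain ⟨π, h1, h2, h3⟩ := cell_coupling μ ν c c hc hc r (by
      intro S
      have hS : MeasurableSet (c ⁻¹' S) := hc (Set.toFinite S).measurableSet
      refine le_of_forall_lt fun t ht => ?_
      obtain ⟨K, hKS, ⟨hK, -⟩, hKt⟩ := innerRegular_isCompact_isClosed_measurableSet_of_finite μ hS t ht
      refine hKt.trans_le ?_
      calc μ K ≤ μ {y | ∃ x ∈ K, x ≤ y} := measure_mono fun x hx => ⟨x, hx, le_rfl⟩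
        _ ≤ ν {y | ∃ x ∈ K, x ≤ y} := h _ (isClosed_up hK).measurableSet isUpper_up
        _ ≤ _ := measure_mono ?_
      rintro y ⟨x, hx, hxy⟩
      exact ⟨c x, hKS hx, fun i j hi hj => ⟨x, hi, y, hj, hxy⟩⟩)
    refine ⟨π, h1, h2, fun i hi j hj hij => ?_⟩
    refine measure_mono_null ?_ h3
    rintro ⟨x, y⟩ ⟨hx, hy⟩ hr
    obtain ⟨x', hx', y', hy', hle⟩ := hr ⟨i, hi⟩ ⟨j, hj⟩ hx hy
    exact hij x' hx' y' hy' hle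
  choose π h1 h2 h3 using step
  have hprob : ∀ n, IsProbabilityMeasure (π n) := fun n => by
    have : IsProbabilityMeasure ((π n).map Prod.fst) := by rw [h1]; infer_instance
    exact Measure.isProbabilityMeasure_of_map Prod.fst
  let Q : ℕ → ProbabilityMeasure (E × E) := fun n => ⟨π n, hprob n⟩
  have htight : IsTightMeasureSet {((m : ProbabilityMeasure (E × E)) : Measure (E × E)) | m ∈ Set.range Q} := by
    apply IsTightMeasureSet.prodMk
    · refine (isTightMeasureSet_singleton (μ := μ)).subset ?_
      rintro _ ⟨_, ⟨_, ⟨n, rfl⟩, rfl⟩, rfl⟩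
      exact h1 n
    · refine (isTightMeasureSet_singleton (μ := ν)).subset ?_
      rintro _ ⟨_, ⟨_, ⟨n, rfl⟩, rfl⟩, rfl⟩
      exact h2 n
  have hcomp := isCompact_closure_of_isTightMeasureSet htight
  obtain ⟨P, -, hP⟩ := hcomp.ultrafilter_le_nhds ((hyperfilter ℕ).map Q) (by
    rw [le_principal_iff]
    exact Filter.mem_of_superset (Filter.range_mem_map) subset_closure)
  have hlim : Tendsto Q (hyperfilter ℕ : Filter ℕ) (𝓝 P) := hP
  refine ⟨P, ?_, ?_, ?_⟩
  · have t1 := ((ProbabilityMeasure.continuous_map (continuous_fst (X := E) (Y := E))).tendsto P).comp hlim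
    let m₀ : ProbabilityMeasure E := ⟨μ, inferInstance⟩
    have t2 : Tendsto (fun _ : ℕ => m₀) (hyperfilter ℕ : Filter ℕ) (𝓝 m₀) :=
      tendsto_const_nhds
    have heq : ∀ n, ProbabilityMeasure.map (Q n)
        (continuous_fst (X := E) (Y := E)).measurable.aemeasurable = m₀ :=
      fun n => Subtype.ext (h1 n)
    have := tendsto_nhds_unique (t1.congr heq) t2
    exact congrArg Subtype.val this
  · have t1 := ((ProbabilityMeasure.continuous_map (continuous_snd (X := E) (Y := E))).tendsto P).comp hlim
    let m₀ : ProbabilityMeasure E := ⟨ν, inferInstance⟩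
    have t2 : Tendsto (fun _ : ℕ => m₀) (hyperfilter ℕ : Filter ℕ) (𝓝 m₀) :=
      tendsto_const_nhds
    have heq : ∀ n, ProbabilityMeasure.map (Q n)
        (continuous_snd (X := E) (Y := E)).measurable.aemeasurable = m₀ :=
      fun n => Subtype.ext (h2 n)
    have := tendsto_nhds_unique (t1.congr heq) t2
    exact congrArg Subtype.val this
  · have hz : ∀ i j, (∀ x ∈ B i, ∀ y ∈ B j, ¬ x ≤ y) → (P : Measure (E × E)) (B i ×ˢ B j) = 0 := by
      intro i j hij
      have := ProbabilityMeasure.le_liminf_measure_open_of_tendsto hlim ((hBo i).prod (hBo j))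
      refine le_antisymm (this.trans ?_) zero_le
      have hev : ∀ᶠ n in (hyperfilter ℕ : Filter ℕ), (Q n : Measure (E × E)) (B i ×ˢ B j) = 0 := by
        have : ∀ᶠ n in (atTop : Filter ℕ), (Q n : Measure (E × E)) (B i ×ˢ B j) = 0 := by
          filter_upwards [eventually_gt_atTop i, eventually_gt_atTop j] with n hi hj
          exact h3 n i hi j hj hij
        exact Nat.hyperfilter_le_atTop this
      rw [Filter.liminf_congr hev]
      simp
    have hsub : {q : E × E | ¬ q.1 ≤ q.2} ⊆
        ⋃ i, ⋃ j, ⋃ (_ : ∀ x ∈ B i, ∀ y ∈ B j, ¬ x ≤ y), B i ×ˢ B j := by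
      rintro ⟨x, y⟩ hxy
      have ho : IsOpen {q : E × E | ¬ q.1 ≤ q.2} :=
        (isClosed_le continuous_fst continuous_snd).isOpen_compl
      obtain ⟨U, V, hU, hV, hx, hy, hUV⟩ := isOpen_prod_iff.1 ho x y hxy
      obtain ⟨u, hu, hxu, huU⟩ := (TopologicalSpace.isBasis_countableBasis E).exists_subset_of_mem_open hx hU
      obtain ⟨v, hv, hyv, hvV⟩ := (TopologicalSpace.isBasis_countableBasis E).exists_subset_of_mem_open hy hV
      rw [hB] at hu hv
      obtain ⟨i, rfl⟩ := hu
      obtain ⟨j, rfl⟩ := hv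
      simp only [Set.mem_iUnion]
      exact ⟨i, j, fun a ha b hb => hUV (Set.mk_mem_prod (huU ha) (hvV hb)), hxu, hyv⟩
    refine measure_mono_null hsub ?_
    simp only [measure_iUnion_null_iff]
    exact hz

lemma exists_chain {E : Type*} [TopologicalSpace E] [PolishSpace E] [MeasurableSpace E] [BorelSpace E]
    [Nonempty E] (μs : ℕ → Measure E) [∀ n, IsProbabilityMeasure (μs n)]
    (π : ℕ → Measure (E × E)) (h1 : ∀ n, (π n).map Prod.fst = μs n)
    (h2 : ∀ n, (π n).map Prod.snd = μs (n + 1)) :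
    ∃ P : Measure (ℕ → E), IsProbabilityMeasure P ∧ (∀ n, P.map (fun x => x n) = μs n) ∧
      ∀ n, P.map (fun x => (x n, x (n + 1))) = π n := by
  have hprob : ∀ n, IsProbabilityMeasure (π n) := fun n => by
    have : IsProbabilityMeasure ((π n).map Prod.fst) := by rw [h1]; infer_instance
    exact Measure.isProbabilityMeasure_of_map Prod.fst
  let e : ∀ n : ℕ, (Finset.Iic n → E) → E := fun n x => x ⟨n, Finset.mem_Iic.2 le_rfl⟩
  have he : ∀ n, Measurable (e n) := fun n => measurable_pi_apply _
  let κ : (n : ℕ) → Kernel (Finset.Iic n → E) E := fun n => ((π n).condKernel).comap (e n) (he n)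
  have hκ : ∀ n, IsMarkovKernel (κ n) := fun n => by dsimp only [κ]; infer_instance
  let P : Measure (ℕ → E) := Kernel.trajMeasure (X := fun _ => E) (μs 0) κ
  have hP : IsProbabilityMeasure P := by dsimp only [P]; infer_instance
  have pair : ∀ n, P.map (fun x => x n) = μs n → P.map (fun x => (x n, x (n + 1))) = π n := by
    intro n hn
    have key : P.map (Preorder.frestrictLe n) ⊗ₘ κ n = P.map (fun x => (Preorder.frestrictLe n x, x (n + 1))) :=
      Kernel.map_frestrictLe_trajMeasure_compProd_eq_map_trajMeasure (X := fun _ => E)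
    have hm : Measurable (fun x : ℕ → E => (Preorder.frestrictLe (π := fun _ => E) n x, x (n + 1))) := by fun_prop
    have hpm : Measurable (Prod.map (e n) (id : E → E)) := (he n).prodMap measurable_id
    have : P.map (fun x => (x n, x (n + 1)))
        = (P.map (fun x => (Preorder.frestrictLe n x, x (n + 1)))).map (Prod.map (e n) id) := by
      rw [Measure.map_map hpm hm]; rfl
    rw [this, ← key]
    have hd := (π n).disintegrate (π n).condKernel
    have hfst : (π n).fst = (P.map (Preorder.frestrictLe n)).map (e n) := by
      rw [Measure.map_map (he n) (by fun_prop)]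
      exact (h1 n).trans hn.symm
    conv_rhs => rw [← hd]
    have : IsProbabilityMeasure (P.map (Preorder.frestrictLe (π := fun _ => E) n)) :=
      Measure.isProbabilityMeasure_map (by fun_prop)
    ext A hA
    rw [Measure.map_apply hpm hA, Measure.compProd_apply (hpm hA), Measure.compProd_apply hA, hfst,
      lintegral_map (Kernel.measurable_kernel_prodMk_left hA) (he n)]
    rfl
  have marg : ∀ n, P.map (fun x => x n) = μs n := by
    intro n
    induction n with
    | zero =>
      have : P.map (fun x => x 0) = (P.map (Preorder.frestrictLe (π := fun _ => E) 0)).map (e 0) := by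
        rw [Measure.map_map (he 0) (by fun_prop)]; rfl
      rw [this]
      dsimp only [P]
      rw [Kernel.trajMeasure, Measure.map_comp _ _ (by fun_prop), Kernel.traj_map_frestrictLe,
        Kernel.partialTraj_self, Measure.id_comp, Measure.map_map (he 0) (by fun_prop)]
      exact Measure.map_id
    | succ n ih =>
      rw [← h2 n, ← pair n ih, Measure.map_map measurable_snd (by fun_prop)]
      rfl
  exact ⟨P, hP, marg, fun n => pair n (marg n)⟩

/-- If `E` satisfies (BMC), then so does the space of probability measures:
any sequence of probability measures increasing in stochastic order and bounded above
in stochastic order by a probability measure `lam` converges weakly to some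
probability measure `μ`. -/
theorem stmt3 {E : Type*} [MetricSpace E] [PolishSpace E] [MeasurableSpace E] [BorelSpace E]
    [PartialOrder E] [OrderClosedTopology E]
    (hbmc : BMC E)
    (μs : ℕ → Measure E) [∀ n, IsProbabilityMeasure (μs n)]
    (lam : Measure E) [IsProbabilityMeasure lam]
    (hmono : ∀ n, StochDom (μs n) (μs (n + 1)))
    (hbdd : ∀ n, StochDom (μs n) lam) :
    ∃ μ : Measure E, IsProbabilityMeasure μ ∧
      ∀ g : BoundedContinuousFunction E ℝ,
        Tendsto (fun n => ∫ x, g x ∂(μs n)) atTop (nhds (∫ x, g x ∂μ)) := by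
  have hne : Nonempty E := nonempty_of_isProbabilityMeasure lam
  choose π h1 h2 h3 using fun n => stoch_strassen (μs n) (μs (n + 1)) (hmono n)
  obtain ⟨P, hP, marg, pair⟩ := exists_chain μs π h1 h2
  have hinc : ∀ᵐ x ∂P, Monotone x := by
    have : ∀ᵐ x ∂P, ∀ n, x n ≤ x (n + 1) := by
      rw [ae_all_iff]
      intro n
      have hh := h3 n
      rw [← pair n] at hh
      exact ae_of_ae_map (by fun_prop) hh
    filter_upwards [this] with x hx using monotone_nat_of_le_succ hx
  have hmonomeas : MeasurableSet {x : ℕ → E | Monotone x} := by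
    have : {x : ℕ → E | Monotone x} = ⋂ n, {x | x n ≤ x (n + 1)} := by
      ext x
      simp only [Set.mem_iInter, Set.mem_ofPred_eq]
      exact ⟨fun h n => h n.le_succ, monotone_nat_of_le_succ⟩
    rw [this]
    exact MeasurableSet.iInter fun n =>
      (isClosed_le (continuous_apply n) (continuous_apply (n + 1))).measurableSet
  have hconvmeas : MeasurableSet {x : ℕ → E | ∃ l, Tendsto (fun n => x n) atTop (𝓝 l)} :=
    measurableSet_exists_tendsto (f := fun n (x : ℕ → E) => x n)
      fun n => measurable_pi_apply n
  let D : Set (ℕ → E) := {x | Monotone x} ∩ {x | ∃ l, Tendsto (fun n => x n) atTop (𝓝 l)}ᶜ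
  have hD : MeasurableSet D := hmonomeas.inter hconvmeas.compl
  have hcompact : ∀ K ⊆ D, IsCompact K → P K = 0 := by
    intro K hKD hK
    let F : ℕ → Set E := fun N => {y | ∃ x ∈ (fun x : ℕ → E => x N) '' K, x ≤ y}
    have hF : ∀ N, IsClosed (F N) := fun N => isClosed_up (hK.image (continuous_apply N))
    have hanti : Antitone F := by
      rintro m n hmn y ⟨_, ⟨x, hx, rfl⟩, hy⟩
      exact ⟨x m, ⟨x, hx, rfl⟩, ((hKD hx).1 hmn).trans hy⟩
    have hempty : ⋂ N, F N = ∅ := by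
      rw [Set.eq_empty_iff_forall_notMem]
      intro z hz
      rw [Set.mem_iInter] at hz
      have : ∀ N, ∃ x ∈ K, x N ≤ z := fun N => by
        obtain ⟨_, ⟨x, hx, rfl⟩, hy⟩ := hz N
        exact ⟨x, hx, hy⟩
      choose x hxK hxz using this
      obtain ⟨l, hl, φ, hφ, hlim⟩ := hK.tendsto_subseq hxK
      refine (hKD hl).2 (hbmc l z (hKD hl).1 fun n => ?_)
      have ht : Tendsto (fun k => x (φ k) n) atTop (𝓝 (l n)) := (tendsto_pi_nhds.1 hlim) n
      refine le_of_tendsto ht ?_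
      filter_upwards [eventually_ge_atTop n] with k hk
      exact ((hKD (hxK (φ k))).1 (hk.trans (hφ.id_le k))).trans (hxz (φ k))
    have hle : ∀ N, P K ≤ lam (F N) := by
      intro N
      calc P K ≤ P ((fun x : ℕ → E => x N) ⁻¹' F N) :=
            measure_mono fun x hx => ⟨x N, ⟨x, hx, rfl⟩, le_rfl⟩
        _ = μs N (F N) := by
            rw [← Measure.map_apply (measurable_pi_apply N) (hF N).measurableSet, marg N]
        _ ≤ lam (F N) := hbdd N _ (hF N).measurableSet isUpper_up
    have hlim := tendsto_measure_iInter_atTop (μ := lam)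
      (fun N => (hF N).measurableSet.nullMeasurableSet) hanti ⟨0, measure_ne_top _ _⟩
    rw [hempty, measure_empty] at hlim
    exact le_antisymm (ge_of_tendsto' hlim hle) zero_le
  have hD0 : P D = 0 := by
    by_contra hne
    obtain ⟨K, hKD, ⟨hK, -⟩, hlt⟩ :=
      innerRegular_isCompact_isClosed_measurableSet_of_finite P hD 0 (pos_iff_ne_zero.2 hne)
    exact hlt.ne' (hcompact K hKD hK)
  have hconv : ∀ᵐ x ∂P, ∃ l, Tendsto (fun n => x n) atTop (𝓝 l) := by
    have hD' : ∀ᵐ x ∂P, x ∉ D := measure_eq_zero_iff_ae_notMem.1 hD0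
    filter_upwards [hinc, hD'] with x hx hxD
    by_contra hc
    exact hxD ⟨hx, hc⟩
  obtain ⟨X, hX, hXlim⟩ := measurable_limit_of_tendsto_metrizable_ae (μ := P)
    (f := fun n (x : ℕ → E) => x n) (fun n => (measurable_pi_apply n).aemeasurable) hconv
  refine ⟨P.map X, Measure.isProbabilityMeasure_map hX.aemeasurable, fun g => ?_⟩
  have e1 : ∀ n, ∫ y, g y ∂(μs n) = ∫ x, g (x n) ∂P := fun n => by
    rw [← marg n, integral_map (measurable_pi_apply n).aemeasurable
      g.continuous.measurable.aestronglyMeasurable]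
  simp only [e1]
  rw [integral_map hX.aemeasurable g.continuous.measurable.aestronglyMeasurable]
  refine tendsto_integral_of_dominated_convergence (fun _ => ‖g‖) (fun n => ?_)
    (integrable_const _) (fun n => Eventually.of_forall fun x => g.norm_coe_le_norm _) ?_
  · exact (g.continuous.measurable.comp (measurable_pi_apply n)).aestronglyMeasurable
  · filter_upwards [hXlim] with x hx
    exact (g.continuous.tendsto _).comp hx
end

section
/- Let E be an ordered Polish space and let π₁ and π₂ be two Borel probability measures on E such that π₁(I) = π₂(I) for every Borel increasing set I ⊆ E. Then π₁ = π₂. -/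
open MeasureTheory ProbabilityTheory Filter Topology

/-- The upper closure of a Borel set in an ordered Polish space is analytic. -/
lemma analytic_up {E : Type*} [TopologicalSpace E] [PolishSpace E] [MeasurableSpace E]
    [BorelSpace E] [PartialOrder E] [OrderClosedTopology E] {C : Set E} (hC : MeasurableSet C) :
    AnalyticSet {y : E | ∃ x ∈ C, x ≤ y} := by
  have h1 : MeasurableSet ((Prod.fst ⁻¹' C) ∩ {p : E × E | p.1 ≤ p.2}) :=
    (measurable_fst hC).inter (OrderClosedTopology.isClosed_le').measurableSet
  have h2 := h1.analyticSet.image_of_continuous (continuous_snd : Continuous (Prod.snd : E × E → E))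
  convert h2 using 1
  ext y
  simp

lemma analytic_down {E : Type*} [TopologicalSpace E] [PolishSpace E] [MeasurableSpace E]
    [BorelSpace E] [PartialOrder E] [OrderClosedTopology E] {C : Set E} (hC : MeasurableSet C) :
    AnalyticSet {x : E | ∃ y ∈ C, x ≤ y} := by
  have h1 : MeasurableSet ((Prod.snd ⁻¹' C) ∩ {p : E × E | p.1 ≤ p.2}) :=
    (measurable_snd hC).inter (OrderClosedTopology.isClosed_le').measurableSet
  have h2 := h1.analyticSet.image_of_continuous (continuous_fst : Continuous (Prod.fst : E × E → E))
  convert h2 using 1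
  ext y
  simp

/-- Monotone Lusin separation. -/
lemma exists_upper_sep {E : Type*} [TopologicalSpace E] [PolishSpace E] [MeasurableSpace E]
    [BorelSpace E] [PartialOrder E] [OrderClosedTopology E] {U V : Set E}
    (hU : MeasurableSet U) (hV : MeasurableSet V) (hUV : ∀ u ∈ U, ∀ v ∈ V, ¬ u ≤ v) :
    ∃ I : Set E, MeasurableSet I ∧ IsUpperSet I ∧ U ⊆ I ∧ Disjoint V I := by
  have step : ∀ C : {C : Set E // MeasurableSet C ∧ ∀ u ∈ C, ∀ v ∈ V, ¬ u ≤ v},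
      ∃ D : {C : Set E // MeasurableSet C ∧ ∀ u ∈ C, ∀ v ∈ V, ¬ u ≤ v},
        {y : E | ∃ x ∈ C.1, x ≤ y} ⊆ D.1 := by
    rintro ⟨C, hC, hCV⟩
    have hd : Disjoint {y : E | ∃ x ∈ C, x ≤ y} {x : E | ∃ y ∈ V, x ≤ y} := by
      rw [Set.disjoint_left]
      rintro z ⟨x, hx, hxz⟩ ⟨y, hy, hzy⟩
      exact hCV x hx y hy (hxz.trans hzy)
    obtain ⟨D, hD1, hD2, hD3⟩ :=
      (analytic_up hC).measurablySeparable (analytic_down hV) hd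
    refine ⟨⟨D, hD3, ?_⟩, hD1⟩
    intro u hu v hv huv
    exact Set.disjoint_left.1 hD2 ⟨v, hv, huv⟩ hu
  choose F hF using step
  let C : ℕ → {C : Set E // MeasurableSet C ∧ ∀ u ∈ C, ∀ v ∈ V, ¬ u ≤ v} :=
    fun n => F^[n] ⟨U, hU, hUV⟩
  have hsucc : ∀ n, C (n + 1) = F (C n) := fun n => Function.iterate_succ_apply' F n _
  refine ⟨⋃ n, (C n).1, MeasurableSet.iUnion fun n => (C n).2.1, ?_, ?_, ?_⟩
  · intro x y hxy hx
    obtain ⟨n, hn⟩ := Set.mem_iUnion.1 hx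
    refine Set.mem_iUnion.2 ⟨n + 1, ?_⟩
    rw [hsucc]
    exact hF _ ⟨x, hn, hxy⟩
  · exact Set.subset_iUnion (fun n => (C n).1) 0
  · rw [Set.disjoint_left]
    intro v hv hv'
    obtain ⟨n, hn⟩ := Set.mem_iUnion.1 hv'
    exact (C n).2.2 v hn v hv le_rfl

lemma measurable_family {E J : Type*} (m : MeasurableSpace E) (I : J → Set E)
    (hI : ∀ p, MeasurableSet (I p)) : Measurable (fun (x : E) (p : J) => x ∈ I p) :=
  measurable_pi_lambda _ fun p => measurable_mem.2 (hI p)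

/-- The Borel increasing sets generate the Borel sigma-algebra. -/
lemma borel_le_upper {E : Type*} [TopologicalSpace E] [PolishSpace E] [mE : MeasurableSpace E]
    [BorelSpace E] [PartialOrder E] [OrderClosedTopology E] :
    mE = MeasurableSpace.generateFrom {I : Set E | MeasurableSet I ∧ IsUpperSet I} := by
  classical
  apply le_antisymm
  swap
  · exact MeasurableSpace.generateFrom_le fun t ht => ht.1
  let B := TopologicalSpace.countableBasis E
  let J := {p : B × B // ∀ u ∈ p.1.1, ∀ v ∈ p.2.1, ¬ u ≤ v}
  have hB : TopologicalSpace.IsTopologicalBasis B := TopologicalSpace.isBasis_countableBasis E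
  have : Countable B := (TopologicalSpace.countable_countableBasis E).to_subtype
  have hex : ∀ p : J, ∃ I : Set E, MeasurableSet I ∧ IsUpperSet I ∧ p.1.1.1 ⊆ I ∧
      Disjoint p.1.2.1 I := fun p =>
    exists_upper_sep (hB.isOpen p.1.1.2).measurableSet (hB.isOpen p.1.2.2).measurableSet p.2
  choose I hI1 hI2 hI3 hI4 using hex
  let f : E → J → Prop := fun x p => x ∈ I p
  have hf : Measurable f := measurable_pi_lambda _ fun p => measurable_mem.2 (hI1 p)
  have key : ∀ x y, f x = f y → x ≤ y := by
    intro x y hxy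
    by_contra hn
    have ho : IsOpen {p : E × E | p.1 ≤ p.2}ᶜ := OrderClosedTopology.isClosed_le'.isOpen_compl
    obtain ⟨U', V', hU', hV', hx, hy, hs⟩ := isOpen_prod_iff.1 ho x y hn
    obtain ⟨U, hUB, hxU, hU⟩ := hB.exists_subset_of_mem_open hx hU'
    obtain ⟨V, hVB, hyV, hV⟩ := hB.exists_subset_of_mem_open hy hV'
    let p : J := ⟨(⟨U, hUB⟩, ⟨V, hVB⟩), fun u hu v hv huv =>
      hs (Set.mk_mem_prod (hU hu) (hV hv)) huv⟩
    have h1 : x ∈ I p := hI3 p hxU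
    have h2 : y ∉ I p := Set.disjoint_left.1 (hI4 p) hyV
    exact h2 ((congrFun hxy p).mp h1)
  have hinj : Function.Injective f := fun x y hxy => le_antisymm (key _ _ hxy) (key _ _ hxy.symm)
  have hemb : MeasurableEmbedding f := hf.measurableEmbedding hinj
  intro s hs
  have hs' := hemb.measurableSet_image.2 hs
  have hf' : @Measurable E (J → Prop) (MeasurableSpace.generateFrom
      {I : Set E | MeasurableSet I ∧ IsUpperSet I}) _ f := by
    exact measurable_family _ I
      fun p => MeasurableSpace.measurableSet_generateFrom ⟨hI1 p, hI2 p⟩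
  have := hf' hs'
  rwa [Set.preimage_image_eq _ hinj] at this

/-- Lemma 2.8: two Borel probability measures on an ordered Polish space
which agree on all Borel increasing sets are equal. -/
theorem stmt5 {E : Type*} [MetricSpace E] [PolishSpace E] [MeasurableSpace E] [BorelSpace E]
    [PartialOrder E] [OrderClosedTopology E]
    (π₁ π₂ : Measure E) [IsProbabilityMeasure π₁] [IsProbabilityMeasure π₂]
    (h : ∀ I : Set E, MeasurableSet I → IsUpperSet I → π₁ I = π₂ I) :
    π₁ = π₂ := by
  refine ext_of_generate_finite _ borel_le_upper ?_ (fun I hI => h I hI.1 hI.2) (by simp)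
  rintro s hs t ht -
  exact ⟨hs.1.inter ht.1, hs.2.inter ht.2⟩
end

section
/- Let E be an ordered Polish space, let μₙ, n ∈ ℕ, be Borel probability measures on E converging weakly to a probability measure π̃, and let π be a Borel probability measure such that limₙ μₙ(I) = π(I) for every Borel increasing set I ⊆ E. Then π̃ = π. -/
open MeasureTheory ProbabilityTheory Filter Topology

theorem aux_isClosed_upper {E : Type*} [MetricSpace E] [PartialOrder E] [OrderClosedTopology E]
    {C : Set E} (hC : IsCompact C) : IsClosed {y | ∃ x ∈ C, x ≤ y} := by
  refine IsSeqClosed.isClosed fun f y hf hy => ?_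
  choose g hg hgf using hf
  obtain ⟨a, ha, φ, hφ, hlim⟩ := hC.isSeqCompact hg
  exact ⟨a, ha, le_of_tendsto_of_tendsto' hlim (hy.comp hφ.tendsto_atTop) fun n => hgf _⟩

theorem aux_isClosed_lower {E : Type*} [MetricSpace E] [PartialOrder E] [OrderClosedTopology E]
    {C : Set E} (hC : IsCompact C) : IsClosed {y | ∃ x ∈ C, y ≤ x} := by
  refine IsSeqClosed.isClosed fun f y hf hy => ?_
  choose g hg hgf using hf
  obtain ⟨a, ha, φ, hφ, hlim⟩ := hC.isSeqCompact hg
  exact ⟨a, ha, le_of_tendsto_of_tendsto' (hy.comp hφ.tendsto_atTop) hlim fun n => hgf _⟩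

/-- Probability measures agreeing on closed upper sets are equal. -/
theorem aux_ext {E : Type*} [MetricSpace E] [PolishSpace E] [mE : MeasurableSpace E] [BorelSpace E]
    [PartialOrder E] [OrderClosedTopology E]
    (μ ν : Measure E) [IsProbabilityMeasure μ] [IsProbabilityMeasure ν]
    (h : ∀ F : Set E, IsClosed F → IsUpperSet F → μ F = ν F) : μ = ν := by
  classical
  let C : Set (Set E) := {F | IsClosed F ∧ IsUpperSet F}
  have hm : MeasurableSpace.generateFrom C ≤ mE :=
    MeasurableSpace.generateFrom_le fun F hF => hF.1.measurableSet
  have hext : ∀ s, MeasurableSet[MeasurableSpace.generateFrom C] s → μ s = ν s := fun s hs =>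
    ext_on_measurableSpace_of_generate_finite _ C (fun F hF => h F hF.1 hF.2) hm rfl
      (fun F hF G hG _ => ⟨hF.1.inter hG.1, hF.2.inter hG.2⟩) (by simp) hs
  have hK : ∀ n : ℕ, ∃ K : Set E, IsCompact K ∧ IsClosed K ∧
      (μ + ν) Kᶜ < ((n : ENNReal) + 1)⁻¹ := by
    intro n
    obtain ⟨K, -, h1, h2, h3⟩ := (MeasurableSet.univ : MeasurableSet (Set.univ : Set E)).exists_isCompact_isClosed_sdiff_lt
      (μ := μ + ν) (measure_ne_top _ _) (ε := ((n : ENNReal) + 1)⁻¹) (by simp)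
    exact ⟨K, h1, h2, by rwa [Set.compl_eq_univ_sdiff]⟩
  choose K hKc hKcl hKm using hK
  let S : Set E := ⋃ n, K n
  have hSm : MeasurableSet S := MeasurableSet.iUnion fun n => (hKcl n).measurableSet
  have hS0 : (μ + ν) Sᶜ = 0 := by
    refine le_antisymm ?_ bot_le
    have hle : ∀ n : ℕ, (μ + ν) Sᶜ ≤ ((n : ENNReal) + 1)⁻¹ := fun n =>
      (measure_mono (Set.compl_subset_compl.2 (Set.subset_iUnion K n))).trans (hKm n).le
    refine ge_of_tendsto' (f := fun n : ℕ => ((n : ENNReal) + 1)⁻¹) (x := atTop) ?_ hle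
    have := (tendsto_add_atTop_iff_nat 1).2 ENNReal.tendsto_inv_nat_nhds_zero
    simpa using this
  have hμS : μ Sᶜ = 0 := by
    rw [Measure.add_apply] at hS0; exact (add_eq_zero.1 hS0).1
  have hνS : ν Sᶜ = 0 := by
    rw [Measure.add_apply] at hS0; exact (add_eq_zero.1 hS0).2
  let B := TopologicalSpace.countableBasis E
  have : Countable B := (TopologicalSpace.countable_countableBasis E).to_subtype
  let G : ℕ × B → Set E := fun i => {y | ∃ x ∈ K i.1 ∩ closure (i.2 : Set E), x ≤ y}
  have hGC : ∀ i, G i ∈ C := fun i =>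
    ⟨aux_isClosed_upper ((hKc i.1).inter_right isClosed_closure),
      fun a b hab ⟨x, hx, hxa⟩ => ⟨x, hx, hxa.trans hab⟩⟩
  let Φ : E → (ℕ × B → Prop) := fun x i => x ∈ G i
  have hΦ : @Measurable _ _ (MeasurableSpace.generateFrom C) _ Φ := by
    refine @measurable_pi_lambda _ _ _ (MeasurableSpace.generateFrom C) _ _ fun i => ?_
    exact (@measurableSet_setOf _ (MeasurableSpace.generateFrom C) _).1 (MeasurableSpace.measurableSet_generateFrom (hGC i))
  have hΦ' : Measurable Φ := hΦ.mono hm le_rfl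
  have key : ∀ x y, y ∈ S → Φ x = Φ y → y ≤ x := by
    intro x y hy hxy
    by_contra hne
    obtain ⟨n, hn⟩ := Set.mem_iUnion.1 hy
    obtain ⟨t, htB, hyt, ht⟩ := (TopologicalSpace.isBasis_countableBasis E).exists_closure_subset
      ((isClosed_Iic (a := x)).isOpen_compl.mem_nhds hne)
    have h1 : Φ y (n, ⟨t, htB⟩) := ⟨y, ⟨hn, subset_closure hyt⟩, le_rfl⟩
    rw [← hxy] at h1
    obtain ⟨z, hz, hzx⟩ := h1
    exact ht hz.2 hzx
  have hinj : Set.InjOn Φ S := fun x hx y hy hxy =>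
    le_antisymm (key y x hx hxy.symm) (key x y hy hxy)
  ext A hA
  have hAS : MeasurableSet (A ∩ S) := hA.inter hSm
  have him : MeasurableSet (Φ '' (A ∩ S)) :=
    hAS.image_of_measurable_injOn hΦ' (hinj.mono Set.inter_subset_right)
  have hpre : Φ ⁻¹' (Φ '' (A ∩ S)) ∩ S = A ∩ S := by
    ext x
    constructor
    · rintro ⟨⟨y, hy, hxy⟩, hx⟩
      rwa [← hinj hy.2 hx hxy]
    · intro hx
      exact ⟨⟨x, hx, rfl⟩, hx.2⟩
  have e := hext _ (hΦ him)
  rw [← measure_inter_conull hμS, ← measure_inter_conull hνS, hpre,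
    measure_inter_conull hμS, measure_inter_conull hνS] at e
  exact e

/-- Lemma 2.10: if `μₙ` converges weakly to `π̃` and `μₙ(I) → π(I)` for every
Borel increasing set `I`, then `π̃ = π`. -/
theorem stmt6 {E : Type*} [MetricSpace E] [PolishSpace E] [MeasurableSpace E] [BorelSpace E]
    [PartialOrder E] [OrderClosedTopology E]
    (μs : ℕ → Measure E) [∀ n, IsProbabilityMeasure (μs n)]
    (πt π : Measure E) [IsProbabilityMeasure πt] [IsProbabilityMeasure π]
    (hweak : ∀ g : BoundedContinuousFunction E ℝ,
      Tendsto (fun n => ∫ x, g x ∂(μs n)) atTop (nhds (∫ x, g x ∂πt)))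
    (hI : ∀ I : Set E, MeasurableSet I → IsUpperSet I →
      Tendsto (fun n => μs n I) atTop (nhds (π I))) :
    πt = π := by
  have hlim : Tendsto (β := ProbabilityMeasure E) (fun n => ⟨μs n, inferInstance⟩) atTop
      (𝓝 ⟨πt, inferInstance⟩) :=
    ProbabilityMeasure.tendsto_iff_forall_integral_tendsto.2 hweak
  have hup : ∀ F : Set E, IsClosed F → IsUpperSet F → π F ≤ πt F := by
    intro F hF hFu
    have h1 := ProbabilityMeasure.limsup_measure_closed_le_of_tendsto hlim hF
    have h2 := (hI F hF.measurableSet hFu).limsup_eq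
    rw [← h2]
    exact h1
  have hlow : ∀ F : Set E, IsOpen F → IsUpperSet F → πt F ≤ π F := by
    intro F hF hFu
    have h1 := ProbabilityMeasure.le_liminf_measure_open_of_tendsto hlim hF
    have h2 := (hI F hF.measurableSet hFu).liminf_eq
    rw [← h2]
    exact h1
  refine aux_ext πt π fun F hF hFu => le_antisymm ?_ (hup F hF hFu)
  have hc : π Fᶜ ≤ πt Fᶜ := by
    refine le_of_forall_lt fun r hr => ?_
    obtain ⟨C, hCF, hC, hrC⟩ := hF.isOpen_compl.measurableSet.exists_lt_isCompact_of_ne_top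
      (measure_ne_top π _) hr
    have hD := aux_isClosed_lower hC
    have hDu : IsUpperSet {y | ∃ x ∈ C, y ≤ x}ᶜ := by
      intro a b hab ha hb
      obtain ⟨x, hx, hbx⟩ := hb
      exact ha ⟨x, hx, hab.trans hbx⟩
    have h1 := hlow _ hD.isOpen_compl hDu
    rw [prob_compl_eq_one_sub hD.measurableSet, prob_compl_eq_one_sub hD.measurableSet] at h1
    have h2 : π {y | ∃ x ∈ C, y ≤ x} ≤ πt {y | ∃ x ∈ C, y ≤ x} :=
      (ENNReal.sub_le_sub_iff_left prob_le_one ENNReal.one_ne_top).1 h1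
    calc r < π C := hrC
      _ ≤ π {y | ∃ x ∈ C, y ≤ x} := measure_mono fun x hx => ⟨x, hx, le_rfl⟩
      _ ≤ πt {y | ∃ x ∈ C, y ≤ x} := h2
      _ ≤ πt Fᶜ := measure_mono (by
        rintro y ⟨x, hx, hyx⟩ hy
        exact hCF hx (hFu hyx hy))
  rw [prob_compl_eq_one_sub hF.measurableSet, prob_compl_eq_one_sub hF.measurableSet] at hc
  exact (ENNReal.sub_le_sub_iff_left prob_le_one ENNReal.one_ne_top).1 hc
end

section
/- Let E be an ordered Polish space and P a monotone Markov kernel on E such that the set M = {(x,y) : x ⪯ y} is achievable, and assume there exists a stationary distribution π for P. Then π is the unique stationary distribution and, for each x ∈ E, sup over g ∈ G of |E[g(Xₙˣ)] − ∫ g dπ| tends to 0 as n → ∞. -/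
open MeasureTheory ProbabilityTheory Filter Topology

theorem analytic_sep {E : Type*} [MetricSpace E] [PolishSpace E] [MeasurableSpace E] [BorelSpace E]
    [PartialOrder E] [OrderClosedTopology E] (U V : Set E) (hU : MeasurableSet U)
    (hV : MeasurableSet V) (h : ∀ x ∈ U, ∀ y ∈ V, ¬ x ≤ y) :
    ∃ I : Set E, MeasurableSet I ∧ IsUpperSet I ∧ U ⊆ I ∧ Disjoint I V := by
  have hM : MeasurableSet {p : E × E | p.1 ≤ p.2} :=
    (isClosed_le continuous_fst continuous_snd).measurableSet
  have hup : ∀ B : Set E, MeasurableSet B → AnalyticSet {y | ∃ x ∈ B, x ≤ y} := by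
    intro B hB
    have : {y | ∃ x ∈ B, x ≤ y} = Prod.snd '' ({p : E × E | p.1 ≤ p.2} ∩ Prod.fst ⁻¹' B) := by
      ext y; simp; grind
    rw [this]
    exact ((hM.inter (measurable_fst hB)).analyticSet).image_of_continuous continuous_snd
  have hC : AnalyticSet {x | ∃ y ∈ V, x ≤ y} := by
    have : {x | ∃ y ∈ V, x ≤ y} = Prod.fst '' ({p : E × E | p.1 ≤ p.2} ∩ Prod.snd ⁻¹' V) := by
      ext y; simp; grind
    rw [this]
    exact ((hM.inter (measurable_snd hV)).analyticSet).image_of_continuous continuous_fst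
  set C := {x | ∃ y ∈ V, x ≤ y} with hCdef
  have step : ∀ B : {B : Set E // MeasurableSet B ∧ Disjoint B C},
      ∃ B' : {B : Set E // MeasurableSet B ∧ Disjoint B C}, ∀ x ∈ B.1, ∀ y, x ≤ y → y ∈ B'.1 := by
    rintro ⟨B, hB, hBC⟩
    have hd : Disjoint {y | ∃ x ∈ B, x ≤ y} C := by
      rw [Set.disjoint_left] at hBC ⊢
      rintro y ⟨x, hx, hxy⟩ ⟨v, hv, hyv⟩
      exact hBC hx ⟨v, hv, hxy.trans hyv⟩
    obtain ⟨u, hu1, hu2, hu3⟩ := (hup B hB).measurablySeparable hC hd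
    exact ⟨⟨u, hu3, hu2.symm⟩, fun x hx y hxy => hu1 ⟨x, hx, hxy⟩⟩
  choose F hF using step
  have hU0 : Disjoint U C := by
    rw [Set.disjoint_left]
    rintro x hx ⟨v, hv, hxv⟩
    exact h x hx v hv hxv
  let Bs : ℕ → {B : Set E // MeasurableSet B ∧ Disjoint B C} :=
    fun n => F^[n] ⟨U, hU, hU0⟩
  refine ⟨⋃ n, (Bs n).1, MeasurableSet.iUnion fun n => (Bs n).2.1, ?_, ?_, ?_⟩
  · intro x y hxy hx
    obtain ⟨n, hn⟩ := Set.mem_iUnion.1 hx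
    refine Set.mem_iUnion.2 ⟨n + 1, ?_⟩
    have : Bs (n + 1) = F (Bs n) := Function.iterate_succ_apply' _ _ _
    rw [this]
    exact hF _ x hn y hxy
  · exact Set.subset_iUnion (fun n => (Bs n).1) 0
  · rw [Set.disjoint_iUnion_left]
    intro n
    have hVC : V ⊆ C := fun v hv => ⟨v, hv, le_rfl⟩
    exact (Bs n).2.2.mono_right hVC

theorem exists_sep_family (E : Type*) [MetricSpace E] [PolishSpace E] [MeasurableSpace E]
    [BorelSpace E] [PartialOrder E] [OrderClosedTopology E] :
    ∃ I : ℕ → Set E, (∀ n, MeasurableSet (I n)) ∧ (∀ n, IsUpperSet (I n)) ∧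
      ∀ x y, ¬ x ≤ y → ∃ n, x ∈ I n ∧ y ∉ I n := by
  classical
  have hb := TopologicalSpace.isBasis_countableBasis E
  have hcount : (TopologicalSpace.countableBasis E).Countable :=
    TopologicalSpace.countable_countableBasis E
  have : Countable (TopologicalSpace.countableBasis E) := hcount.to_subtype
  let T := {p : TopologicalSpace.countableBasis E × TopologicalSpace.countableBasis E //
    ∀ x ∈ p.1.1, ∀ y ∈ p.2.1, ¬ x ≤ y}
  have key : ∀ p : T, ∃ I : Set E, MeasurableSet I ∧ IsUpperSet I ∧ p.1.1.1 ⊆ I ∧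
      Disjoint I p.1.2.1 := fun p => analytic_sep _ _ (hb.isOpen p.1.1.2).measurableSet
        (hb.isOpen p.1.2.2).measurableSet p.2
  choose J hJ using key
  have hsep : ∀ x y : E, ¬ x ≤ y → ∃ p : T, x ∈ J p ∧ y ∉ J p := by
    intro x y hxy
    have hopen : IsOpen {p : E × E | p.1 ≤ p.2}ᶜ :=
      (isClosed_le continuous_fst continuous_snd).isOpen_compl
    obtain ⟨u, v, hu, hv, hxu, hyv, huv⟩ := isOpen_prod_iff.1 hopen x y hxy
    obtain ⟨u', hu', hxu', hu'u⟩ := hb.exists_subset_of_mem_open hxu hu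
    obtain ⟨v', hv', hyv', hv'v⟩ := hb.exists_subset_of_mem_open hyv hv
    refine ⟨⟨(⟨u', hu'⟩, ⟨v', hv'⟩), ?_⟩, (hJ _).2.2.1 hxu', ?_⟩
    · intro a ha b hb
      exact huv (Set.mk_mem_prod (hu'u ha) (hv'v hb))
    · exact fun hy => Set.disjoint_left.1 (hJ _).2.2.2 hy hyv'
  obtain ⟨e, he⟩ := exists_injective_nat T
  refine ⟨fun n => if h : ∃ p, e p = n then J h.choose else ∅, ?_, ?_, ?_⟩
  · intro n
    dsimp only
    split_ifs
    · exact (hJ _).1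
    · exact MeasurableSet.empty
  · intro n
    dsimp only
    split_ifs
    · exact (hJ _).2.1
    · exact isUpperSet_empty
  · intro x y hxy
    obtain ⟨p, hp⟩ := hsep x y hxy
    refine ⟨e p, ?_⟩
    have h : ∃ q, e q = e p := ⟨p, rfl⟩
    have h2 : h.choose = p := he h.choose_spec
    dsimp only
    rw [dif_pos h, h2]
    exact hp

theorem measure_ext_upper {E : Type*} [MetricSpace E] [PolishSpace E] [MeasurableSpace E]
    [BorelSpace E] [PartialOrder E] [OrderClosedTopology E] (μ ν : Measure E)
    [IsProbabilityMeasure μ] [IsProbabilityMeasure ν]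
    (h : ∀ I : Set E, MeasurableSet I → IsUpperSet I → μ I = ν I) : μ = ν := by
  obtain ⟨I, hI, hIu, hsep⟩ := exists_sep_family E
  let F : E → ℕ → Prop := fun x n => x ∈ I n
  have hFm : Measurable F := measurable_pi_lambda _ fun n => measurable_mem.2 (hI n)
  have hFi : Function.Injective F := by
    intro x y hxy
    by_contra hne
    have : ¬ x ≤ y ∨ ¬ y ≤ x := by
      by_contra hcon
      push Not at hcon
      exact hne (le_antisymm hcon.1 hcon.2)
    rcases this with h1 | h1
    · obtain ⟨n, hn, hn'⟩ := hsep _ _ h1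
      exact hn' ((congrFun hxy n).mp hn)
    · obtain ⟨n, hn, hn'⟩ := hsep _ _ h1
      exact hn' ((congrFun hxy n).mpr hn)
  have hemb := hFm.measurableEmbedding hFi
  have hgen : (inferInstance : MeasurableSpace E) = MeasurableSpace.generateFrom (Set.range I) := by
    apply le_antisymm
    · rw [← hemb.comap_eq]
      refine Measurable.comap_le ?_
      refine @measurable_pi_lambda _ _ _ (MeasurableSpace.generateFrom (Set.range I)) _ _ fun n => ?_
      refine (@measurable_mem _ (I n) (MeasurableSpace.generateFrom (Set.range I))).2 ?_
      exact MeasurableSpace.measurableSet_generateFrom ⟨n, rfl⟩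
    · exact MeasurableSpace.generateFrom_le (by rintro _ ⟨n, rfl⟩; exact hI n)
  rw [← generateFrom_generatePiSystem_eq] at hgen
  refine ext_of_generate_finite _ hgen (isPiSystem_generatePiSystem _) ?_ (by simp)
  intro s hs
  have : MeasurableSet s ∧ IsUpperSet s := by
    induction hs with
    | base h => obtain ⟨n, rfl⟩ := h; exact ⟨hI n, hIu n⟩
    | inter _ _ _ h1 h2 => exact ⟨h1.1.inter h2.1, h1.2.inter h2.2⟩
  exact h s this.1 this.2

instance kpow_markov {E : Type*} [MeasurableSpace E] (P : Kernel E E) [IsMarkovKernel P] (n : ℕ) :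
    IsMarkovKernel (kpow P n) := by
  induction n with
  | zero => simp only [kpow]; infer_instance
  | succ n ih => simp only [kpow]; infer_instance

theorem integrable_unit {α : Type*} [MeasurableSpace α] (μ : Measure α) [IsFiniteMeasure μ]
    {g : α → ℝ} (hg : Measurable g) (h : ∀ x, g x ∈ Set.Icc (0 : ℝ) 1) : Integrable g μ := by
  refine Integrable.of_bound hg.aestronglyMeasurable 1 (ae_of_all _ fun x => ?_)
  rw [Real.norm_eq_abs, abs_of_nonneg (h x).1]
  exact (h x).2

theorem integral_bind_unit {α β : Type*} [MeasurableSpace α] [MeasurableSpace β] (μ : Measure α)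
    [IsFiniteMeasure μ] (K : Kernel α β) [IsMarkovKernel K]
    {g : β → ℝ} (hg : Measurable g) (h : ∀ x, g x ∈ Set.Icc (0 : ℝ) 1) :
    ∫ y, g y ∂(μ.bind K) = ∫ x, ∫ y, g y ∂(K x) ∂μ := by
  rw [Measure.comp_eq_comp_const_apply, Kernel.integral_comp, Kernel.const_apply]
  exact integrable_unit _ hg h

theorem kernel_int_unit {α β : Type*} [MeasurableSpace α] [MeasurableSpace β] (K : Kernel α β)
    [IsMarkovKernel K] {g : β → ℝ} (hg : Measurable g) (h : ∀ x, g x ∈ Set.Icc (0 : ℝ) 1) :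
    Measurable (fun x => ∫ y, g y ∂(K x)) ∧ ∀ x, ∫ y, g y ∂(K x) ∈ Set.Icc (0 : ℝ) 1 := by
  refine ⟨hg.stronglyMeasurable.integral_kernel.measurable, fun x => ⟨integral_nonneg fun y => (h y).1, ?_⟩⟩
  calc ∫ y, g y ∂(K x) ≤ ∫ y, (1 : ℝ) ∂(K x) :=
        integral_mono (integrable_unit _ hg h) (integrable_const _) fun y => (h y).2
    _ = 1 := by simp

theorem stat_kpow {E : Type*} [MeasurableSpace E] (P : Kernel E E) [IsMarkovKernel P]
    (π : Measure E) (hstat : π.bind P = π) (n : ℕ) :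
    π.bind (kpow P n) = π := by
  induction n with
  | zero => simp only [kpow]; exact Measure.id_comp
  | succ n ih => simp only [kpow]; rw [← Measure.comp_assoc, ih, hstat]

/-- Stationary bounded subharmonic functions are constant along the chain. -/
theorem subharmonic_const {S : Type*} [MeasurableSpace S] (ν : Measure S) [IsProbabilityMeasure ν]
    (R : Kernel S S) [IsMarkovKernel R] (hR : ν.bind R = ν) {d : S → ℝ} (hd : Measurable d)
    (h : ∀ x, d x ∈ Set.Icc (0 : ℝ) 1) (hsub : ∀ z, d z ≤ ∫ w, d w ∂(R z)) :
    ∀ᵐ z ∂ν, ∀ᵐ w ∂(R z), d w = d z := by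
  have hd2 : Measurable (fun x => d x ^ 2) := hd.pow_const 2
  have h2 : ∀ x, d x ^ 2 ∈ Set.Icc (0 : ℝ) 1 := fun x =>
    ⟨sq_nonneg _, pow_le_one₀ (h x).1 (h x).2⟩
  have hv : ∀ z w, (d w - d z) ^ 2 ∈ Set.Icc (0 : ℝ) 1 := fun z w => by
    obtain ⟨a, b⟩ := h z
    obtain ⟨a', b'⟩ := h w
    constructor <;> nlinarith
  have hv' : ∀ p : S × S, (d p.2 - d p.1) ^ 2 ∈ Set.Icc (0 : ℝ) 1 := fun p => hv _ _
  have hvm : Measurable (fun p : S × S => (d p.2 - d p.1) ^ 2) := by fun_prop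
  have e1 : ∀ z, ∫ w, (d w - d z) ^ 2 ∂(R z)
      = ∫ w, d w ^ 2 ∂(R z) - 2 * d z * ∫ w, d w ∂(R z) + d z ^ 2 := by
    intro z
    have i1 := integrable_unit (R z) hd2 h2
    have i2 := (integrable_unit (R z) hd h).const_mul (2 * d z)
    calc ∫ w, (d w - d z) ^ 2 ∂(R z) = ∫ w, (d w ^ 2 - 2 * d z * d w + d z ^ 2) ∂(R z) := by
          congr 1; ext w; ring
      _ = _ := by
          rw [integral_add (f := fun w => d w ^ 2 - 2 * d z * d w) (i1.sub i2) (integrable_const _),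
            integral_sub i1 i2,
            integral_const_mul]
          simp
  have e2 : ∀ z, ∫ w, (d w - d z) ^ 2 ∂(R z) ≤ ∫ w, d w ^ 2 ∂(R z) - d z ^ 2 := by
    intro z
    rw [e1]
    nlinarith [hsub z, (h z).1]
  have hle : ∫ p, (d p.2 - d p.1) ^ 2 ∂(ν ⊗ₘ R) ≤ 0 := by
    rw [Measure.integral_compProd (integrable_unit _ hvm hv')]
    have k2 := kernel_int_unit R hd2 h2
    have i1 := integrable_unit ν k2.1 k2.2
    have i2 := integrable_unit ν hd2 h2
    have i3 : Integrable (fun z => ∫ w, (d w - d z) ^ 2 ∂(R z)) ν := by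
      refine integrable_unit ν ?_ fun z =>
        (kernel_int_unit R (g := fun w => (d w - d z) ^ 2) (by fun_prop) (hv z)).2 z
      exact (StronglyMeasurable.integral_kernel_prod_right' (κ := R)
        hvm.stronglyMeasurable).measurable
    calc _ ≤ ∫ z, (∫ w, d w ^ 2 ∂(R z) - d z ^ 2) ∂ν :=
          integral_mono i3 (i1.sub i2) e2
      _ = 0 := by
          rw [integral_sub i1 i2, ← integral_bind_unit ν R hd2 h2, hR, sub_self]
  have h0 : ∫ p, (d p.2 - d p.1) ^ 2 ∂(ν ⊗ₘ R) = 0 :=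
    le_antisymm hle (integral_nonneg fun p => sq_nonneg _)
  rw [integral_eq_zero_iff_of_nonneg (fun p => sq_nonneg _) (integrable_unit _ hvm hv')] at h0
  have := Measure.ae_ae_of_ae_compProd h0
  filter_upwards [this] with z hz
  filter_upwards [hz] with w hw
  have : (d w - d z) ^ 2 = 0 := hw
  have := pow_eq_zero_iff (two_ne_zero) |>.1 this
  linarith

theorem prod_stat {E : Type*} [MeasurableSpace E] (K : Kernel E E) [IsMarkovKernel K]
    (π : Measure E) [IsProbabilityMeasure π] (h : π.bind K = π) :
    (π.prod π).bind (K ∥ₖ K) = π.prod π := by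
  have h1 := Measure.prod_comp_right (μ := π) (ν := π) (κ := K)
  have h2 := Measure.prod_comp_left (μ := π) (ν := π) (κ := K)
  rw [h] at h1 h2
  have : (K ∥ₖ K) = (K ∥ₖ Kernel.id) ∘ₖ (Kernel.id ∥ₖ K) := by
    rw [Kernel.parallelComp_comp_parallelComp]; simp
  rw [this, ← Measure.comp_assoc, ← h1, ← h2]

/-- Jensen-like comparison with a product. -/
theorem ofReal_sub_le_prod {E : Type*} [MeasurableSpace E] (α β : Measure E) [IsFiniteMeasure α]
    [IsFiniteMeasure β] (hab : α Set.univ = β Set.univ) {g : E → ℝ} (hg : Measurable g)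
    (h : ∀ x, g x ∈ Set.Icc (0 : ℝ) 1) :
    α Set.univ * ENNReal.ofReal (∫ x, g x ∂α - ∫ x, g x ∂β)
      ≤ ∫⁻ z, ENNReal.ofReal (g z.1 - g z.2) ∂(α.prod β) := by
  have i1 : Integrable (fun z : E × E => g z.1) (α.prod β) :=
    integrable_unit _ (hg.comp measurable_fst) fun z => h z.1
  have i2 : Integrable (fun z : E × E => g z.2) (α.prod β) :=
    integrable_unit _ (hg.comp measurable_snd) fun z => h z.2
  have e1 : ∫ z, g z.1 ∂(α.prod β) = β.real Set.univ * ∫ x, g x ∂α := by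
    have := integral_prod_mul (μ := α) (ν := β) g (fun _ => (1 : ℝ))
    simp at this
    rw [this]; ring
  have e2 : ∫ z, g z.2 ∂(α.prod β) = α.real Set.univ * ∫ x, g x ∂β := by
    have := integral_prod_mul (μ := α) (ν := β) (fun _ => (1 : ℝ)) g
    simpa using this
  have hr : β.real Set.univ = α.real Set.univ := by simp [Measure.real, hab]
  have e3 : ∫ z, (g z.1 - g z.2) ∂(α.prod β)
      = α.real Set.univ * (∫ x, g x ∂α - ∫ x, g x ∂β) := by
    rw [integral_sub i1 i2, e1, e2, hr]; ring
  have e4 : α Set.univ = ENNReal.ofReal (α.real Set.univ) := by simp [Measure.real]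
  rw [e4, ← ENNReal.ofReal_mul measureReal_nonneg, ← e3]
  have i3 := (i1.sub i2).pos_part
  calc ENNReal.ofReal (∫ z, (g z.1 - g z.2) ∂(α.prod β))
      ≤ ENNReal.ofReal (∫ z, max (g z.1 - g z.2) 0 ∂(α.prod β)) := by
        apply ENNReal.ofReal_le_ofReal
        exact integral_mono (i1.sub i2) i3 fun z => le_max_left _ _
    _ = ∫⁻ z, ENNReal.ofReal (max (g z.1 - g z.2) 0) ∂(α.prod β) :=
        ofReal_integral_eq_lintegral_ofReal i3 (ae_of_all _ fun z => le_max_right _ _)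
    _ ≤ _ := by
        apply lintegral_mono
        intro z
        dsimp only
        rcases le_total (g z.1 - g z.2) 0 with h | h
        · simp [max_eq_right h]
        · simp [max_eq_left h]

/-- restricted Markov property -/
theorem MCStep.bind_eq {Ω E : Type*} [MeasurableSpace Ω] [MeasurableSpace E] {μ : Measure Ω}
    [IsProbabilityMeasure μ] {P : Kernel E E} [IsMarkovKernel P] {X : ℕ → Ω → E}
    (hX : ∀ n, Measurable (X n)) (hM : MCStep μ (fun _ => P) X) (n : ℕ)
    (S : Set (Fin (n + 1) → E)) (hS : MeasurableSet S) :
    (μ.restrict {ω | (fun i : Fin (n + 1) => X i.1 ω) ∈ S}).map (X (n + 1))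
      = ((μ.restrict {ω | (fun i : Fin (n + 1) => X i.1 ω) ∈ S}).map (X n)).bind P := by
  have hZ : Measurable (fun ω => fun i : Fin (n + 1) => X i.1 ω) :=
    measurable_pi_lambda _ fun i => hX _
  have hT : MeasurableSet {ω | (fun i : Fin (n + 1) => X i.1 ω) ∈ S} := hZ hS
  set T := {ω | (fun i : Fin (n + 1) => X i.1 ω) ∈ S} with hTdef
  ext A hA
  rw [Measure.bind_apply hA P.aemeasurable, lintegral_map (P.measurable_coe hA) (hX n),
    Measure.map_apply (hX _) hA]
  have := hM n A hA (S.indicator fun _ => 1) (measurable_const.indicator hS) (by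
    intro v; by_cases hv : v ∈ S <;> simp [hv])
  have e1 : ∀ ω, (S.indicator (fun _ => (1 : ℝ)) (fun i : Fin (n + 1) => X i.1 ω))
      = T.indicator (fun _ => 1) ω := by
    intro ω
    rfl
  simp only [e1] at this
  have l : ∫ ω, T.indicator (fun _ => (1 : ℝ)) ω * A.indicator (fun _ => (1 : ℝ)) (X (n + 1) ω) ∂μ
      = ((μ.restrict T) (X (n + 1) ⁻¹' A)).toReal := by
    have : (fun ω => T.indicator (fun _ => (1 : ℝ)) ω * A.indicator (fun _ => (1 : ℝ)) (X (n + 1) ω))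
        = T.indicator ((X (n + 1) ⁻¹' A).indicator fun _ => (1 : ℝ)) := by
      ext ω
      by_cases h1 : ω ∈ T <;> by_cases h2 : X (n + 1) ω ∈ A <;> simp [h1, h2]
    rw [this, integral_indicator hT, integral_indicator (hX _ hA)]
    simp [Measure.real]
  have r : ∫ ω, T.indicator (fun _ => (1 : ℝ)) ω * (P (X n ω) A).toReal ∂μ
      = (∫⁻ ω, P (X n ω) A ∂(μ.restrict T)).toReal := by
    have : (fun ω => T.indicator (fun _ => (1 : ℝ)) ω * (P (X n ω) A).toReal)
        = T.indicator (fun ω => (P (X n ω) A).toReal) := by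
      ext ω
      by_cases h1 : ω ∈ T <;> simp [h1]
    rw [this, integral_indicator hT, integral_toReal]
    · exact ((P.measurable_coe hA).comp (hX n)).aemeasurable
    · exact ae_of_all _ fun ω => measure_lt_top _ _
  rw [l, r] at this
  refine (ENNReal.toReal_eq_toReal_iff' (measure_ne_top _ _) ?_).1 this
  refine ne_top_of_le_ne_top (measure_ne_top (μ.restrict T) Set.univ) ?_
  calc _ ≤ ∫⁻ ω, 1 ∂(μ.restrict T) := lintegral_mono fun ω => prob_le_one
    _ = _ := by simp

theorem IsMChain.law {Ω E : Type*} [MeasurableSpace Ω] [MeasurableSpace E]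
    {μ : Measure Ω} {P : Kernel E E} [IsMarkovKernel P] {x : E} {X : ℕ → Ω → E}
    (h : IsMChain P x μ X) (n : ℕ) : μ.map (X n) = kpow P n x := by
  obtain ⟨hp, hX, h0, hM⟩ := h
  induction n with
  | zero =>
    simp only [kpow, Kernel.id_apply]
    have : μ.map (X 0) = μ.map (fun _ => x) := Measure.map_congr h0
    rw [this, Measure.map_const]; simp
  | succ n ih =>
    have := MCStep.bind_eq hX hM n Set.univ MeasurableSet.univ
    simp only [Set.mem_univ, Set.ofPred_true, Measure.restrict_univ] at this
    rw [this, ih]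
    simp only [kpow, Kernel.comp_apply]

/-- hitting lemma -/
theorem hit_zero {Ω E : Type*} [MeasurableSpace Ω] [MeasurableSpace E]
    {μ : Measure Ω} {P : Kernel E E} [IsMarkovKernel P] {x : E} {X : ℕ → Ω → E}
    (h : IsMChain P x μ X) {D : E → ENNReal} (hD : Measurable D) (hD1 : ∀ z, D z ≤ 1)
    (hsub : ∀ z, D z ≤ ∫⁻ w, D w ∂(P z)) (hhit : ∀ᵐ ω ∂μ, ∃ n, D (X n ω) = 0) : D x = 0 := by
  obtain ⟨hp, hX, h0, hM⟩ := h
  let T : ℕ → Set Ω := fun n => {ω | ∀ i < n, D (X i ω) ≠ 0}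
  have hTm : ∀ n, MeasurableSet (T n) := by
    intro n
    have : T n = ⋂ i, ⋂ (_ : i < n), {ω | D (X i ω) = 0}ᶜ := by ext ω; simp [T]
    rw [this]
    exact MeasurableSet.iInter fun i => MeasurableSet.iInter fun _ =>
      (((hD.comp (hX i)) (measurableSet_singleton 0))).compl
  have key : ∀ n, D x ≤ ∫⁻ ω in T n, D (X n ω) ∂μ := by
    intro n
    induction n with
    | zero =>
      have : T 0 = Set.univ := by ext; simp [T]
      rw [this, Measure.restrict_univ]
      have : ∫⁻ ω, D (X 0 ω) ∂μ = ∫⁻ ω, D x ∂μ :=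
        lintegral_congr_ae (h0.mono fun ω hω => by simp [hω])
      rw [this]; simp
    | succ n ih =>
      refine ih.trans ?_
      let S : Set (Fin (n + 1) → E) := {v | ∀ i, D (v i) ≠ 0}
      have hS : MeasurableSet S := by
        have : S = ⋂ i, {v | D (v i) = 0}ᶜ := by ext; simp [S]
        rw [this]
        exact MeasurableSet.iInter fun i =>
          ((hD.comp (measurable_pi_apply i)) (measurableSet_singleton 0)).compl
      have hTS : {ω | (fun i : Fin (n + 1) => X i.1 ω) ∈ S} = T (n + 1) := by
        ext ω
        simp only [S, T, Set.mem_ofPred_eq]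
        exact ⟨fun h i hi => h ⟨i, hi⟩, fun h i => h i.1 i.2⟩
      have hb := MCStep.bind_eq hX hM n S hS
      rw [hTS] at hb
      calc ∫⁻ ω in T n, D (X n ω) ∂μ = ∫⁻ ω in T (n + 1), D (X n ω) ∂μ := by
            rw [← lintegral_indicator (hTm _), ← lintegral_indicator (hTm _)]
            congr 1
            ext ω
            by_cases h1 : ω ∈ T (n + 1)
            · have h2 : ω ∈ T n := fun i hi => h1 i (by omega)
              simp [h1, h2]
            · by_cases h2 : ω ∈ T n
              · simp only [h1, h2, Set.indicator_of_mem, Set.indicator_of_notMem,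
                  not_false_eq_true]
                by_contra h3
                apply h1
                intro i hi
                rcases Nat.lt_succ_iff_lt_or_eq.1 hi with h4 | rfl
                · exact h2 i h4
                · exact h3
              · simp [h1, h2]
        _ ≤ ∫⁻ ω in T (n + 1), ∫⁻ w, D w ∂(P (X n ω)) ∂μ := lintegral_mono fun ω => hsub _
        _ = ∫⁻ z, D z ∂(((μ.restrict (T (n + 1))).map (X n)).bind P) := by
            rw [Measure.lintegral_bind P.aemeasurable hD.aemeasurable,
              lintegral_map hD.lintegral_kernel (hX n)]
        _ = ∫⁻ ω in T (n + 1), D (X (n + 1) ω) ∂μ := by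
            rw [← hb, lintegral_map hD (hX _)]
  have key2 : ∀ n, D x ≤ μ (T n) := fun n => (key n).trans <| by
    calc _ ≤ ∫⁻ ω in T n, 1 ∂μ := lintegral_mono fun ω => hD1 _
      _ = _ := by simp
  have anti : Antitone T := fun m n hmn ω hω i hi => hω i (hi.trans_le hmn)
  have ht := tendsto_measure_iInter_atTop (μ := μ) (fun n => (hTm n).nullMeasurableSet) anti
    ⟨0, measure_ne_top _ _⟩
  have hz : μ (⋂ n, T n) = 0 := by
    refine measure_mono_null (t := {ω | ¬ ∃ n, D (X n ω) = 0}) ?_ hhit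
    intro ω hω ⟨n, hn⟩
    exact (Set.mem_iInter.1 hω (n + 1)) n (Nat.lt_succ_self n) hn
  rw [hz] at ht
  exact le_antisymm (ge_of_tendsto' ht key2) zero_le

theorem ofReal_integral_le {α : Type*} [MeasurableSpace α] (μ : Measure α) {h : α → ℝ}
    (hi : Integrable h μ) : ENNReal.ofReal (∫ x, h x ∂μ) ≤ ∫⁻ x, ENNReal.ofReal (h x) ∂μ := by
  have i3 := hi.pos_part
  calc ENNReal.ofReal (∫ z, h z ∂μ)
      ≤ ENNReal.ofReal (∫ z, max (h z) 0 ∂μ) := by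
        apply ENNReal.ofReal_le_ofReal
        exact integral_mono hi i3 fun z => le_max_left _ _
    _ = ∫⁻ z, ENNReal.ofReal (max (h z) 0) ∂μ :=
        ofReal_integral_eq_lintegral_ofReal i3 (ae_of_all _ fun z => le_max_right _ _)
    _ ≤ _ := by
        apply lintegral_mono
        intro z
        dsimp only
        rcases le_total (h z) 0 with h | h
        · simp [max_eq_right h]
        · simp [max_eq_left h]

/-- `limsup` in the first index, uniformly in the second. -/
noncomputable def supLim (a : ℕ → ℕ → ENNReal) : ENNReal := ⨅ m, ⨆ k, ⨆ i, a (m + k) i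

theorem supLim_mono {a b : ℕ → ℕ → ENNReal} (h : ∀ k i, a k i ≤ b k i) : supLim a ≤ supLim b :=
  iInf_mono fun m => iSup_mono fun k => iSup_mono fun i => h _ _

theorem supLim_le_one {a : ℕ → ℕ → ENNReal} (h : ∀ k i, a k i ≤ 1) : supLim a ≤ 1 :=
  iInf_le_of_le 0 (iSup_le fun k => iSup_le fun i => h _ _)

theorem supLim_measurable {S : Type*} [MeasurableSpace S] {v : ℕ → ℕ → S → ENNReal}
    (hv : ∀ k i, Measurable (v k i)) : Measurable fun s => supLim fun k i => v k i s :=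
  Measurable.iInf fun m => Measurable.iSup fun k => Measurable.iSup fun i => hv _ _

theorem supLim_tail_anti (a : ℕ → ℕ → ENNReal) :
    Antitone fun m => ⨆ k, ⨆ i, a (m + k) i := by
  intro m m' hm
  obtain ⟨j, rfl⟩ := Nat.exists_eq_add_of_le hm
  refine iSup_le fun k => ?_
  refine le_iSup_of_le (j + k) ?_
  rw [← add_assoc]

theorem supLim_tendsto {a : ℕ → ℕ → ENNReal} (h : supLim a = 0) :
    Tendsto (fun n => a n n) atTop (𝓝 0) := by
  have := tendsto_atTop_iInf (supLim_tail_anti a)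
  change Tendsto _ _ (𝓝 (supLim a)) at this
  rw [h] at this
  refine tendsto_of_tendsto_of_tendsto_of_le_of_le tendsto_const_nhds this (fun _ => zero_le) ?_
  intro n
  exact le_iSup_of_le 0 (le_iSup_of_le n (by simp))

theorem supLim_le_lintegral {S : Type*} [MeasurableSpace S] {v : ℕ → ℕ → S → ENNReal}
    (hv : ∀ k i, Measurable (v k i)) (hv1 : ∀ k i s, v k i s ≤ 1) (η : Measure S)
    [IsFiniteMeasure η] (a : ℕ → ℕ → ENNReal) (C : ENNReal) (n : ℕ)
    (h : ∀ k i, C * a (n + k) i ≤ ∫⁻ s, v k i s ∂η) :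
    C * supLim a ≤ ∫⁻ s, supLim (fun k i => v k i s) ∂η := by
  have e : ∫⁻ s, supLim (fun k i => v k i s) ∂η
      = ⨅ m, ∫⁻ s, ⨆ k, ⨆ i, v (m + k) i s ∂η := by
    unfold supLim
    rw [lintegral_iInf (f := fun m s => ⨆ k, ⨆ i, v (m + k) i s)]
    · exact fun m => Measurable.iSup fun k => Measurable.iSup fun i => hv _ _
    · intro m m' hm s
      exact supLim_tail_anti (fun k i => v k i s) hm
    · refine ne_top_of_le_ne_top (measure_ne_top η Set.univ) ?_
      calc _ ≤ ∫⁻ s, 1 ∂η := lintegral_mono fun s => iSup_le fun k => iSup_le fun i => hv1 _ _ _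
        _ = _ := by simp
  rw [e]
  refine le_iInf fun m => ?_
  calc C * supLim a ≤ C * ⨆ k, ⨆ i, a (n + m + k) i := by
        gcongr
        exact iInf_le _ (n + m)
    _ ≤ _ := by
        simp only [ENNReal.mul_iSup]
        refine iSup_le fun k => iSup_le fun i => ?_
        rw [add_assoc]
        refine (h _ _).trans (lintegral_mono fun s => ?_)
        exact le_iSup_of_le k (le_iSup_of_le i le_rfl)

/-- The core convergence argument along a countable family. -/
theorem core_conv {E : Type*} [MetricSpace E] [PolishSpace E] [MeasurableSpace E] [BorelSpace E]
    [PartialOrder E] [OrderClosedTopology E]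
    (P : Kernel E E) [IsMarkovKernel P]
    (hach : Achievable P {p : E × E | p.1 ≤ p.2})
    (π : Measure E) [IsProbabilityMeasure π] (hstat : π.bind P = π)
    (u : ℕ → ℕ → E → ℝ) (hum : ∀ k i, Measurable (u k i)) (humono : ∀ k i, Monotone (u k i))
    (hu1 : ∀ k i z, u k i z ∈ Set.Icc (0 : ℝ) 1)
    (hus : ∀ k i x, u (k + 1) i x = ∫ y, u k i y ∂(P x)) (x : E) :
    Tendsto (fun n => |u n n x - ∫ z, u 0 n z ∂π|) atTop (𝓝 0) := by
  have hM : MeasurableSet {p : E × E | p.1 ≤ p.2} :=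
    (isClosed_le continuous_fst continuous_snd).measurableSet
  -- n-step
  have hun : ∀ n k i x, u (n + k) i x = ∫ y, u k i y ∂(kpow P n x) := by
    intro n
    induction n with
    | zero => intro k i x; simp [kpow, Kernel.id_apply, integral_dirac' _ _ (hum k i).stronglyMeasurable]
    | succ n ih =>
      intro k i x
      have : n + 1 + k = n + (k + 1) := by ring
      rw [this, ih]
      simp only [kpow]
      rw [Kernel.comp_apply, integral_bind_unit _ _ (hum k i) (hu1 k i)]
      simp only [hus]
  have hc : ∀ k i, ∫ z, u k i z ∂π = ∫ z, u 0 i z ∂π := by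
    intro k i
    conv_rhs => rw [← stat_kpow P π hstat k, integral_bind_unit _ _ (hum 0 i) (hu1 0 i)]
    simp only [← hun]
    rfl
  set c : ℕ → ℝ := fun i => ∫ z, u 0 i z ∂π with hcdef
  have hc1 : ∀ i, c i ∈ Set.Icc (0 : ℝ) 1 := fun i =>
    (kernel_int_unit (Kernel.const Unit π) (hum 0 i) (hu1 0 i)).2 ()
  -- the three functionals
  let v : ℕ → ℕ → E × E → ENNReal := fun k i z => ENNReal.ofReal (u k i z.1 - u k i z.2)
  let vp : ℕ → ℕ → E → ENNReal := fun k i z => ENNReal.ofReal (u k i z - c i)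
  let vm : ℕ → ℕ → E → ENNReal := fun k i z => ENNReal.ofReal (c i - u k i z)
  have hvmeas : ∀ k i, Measurable (v k i) := fun k i =>
    (((hum k i).comp measurable_fst).sub ((hum k i).comp measurable_snd)).ennreal_ofReal
  have hvpmeas : ∀ k i, Measurable (vp k i) := fun k i =>
    ((hum k i).sub measurable_const).ennreal_ofReal
  have hvmmeas : ∀ k i, Measurable (vm k i) := fun k i =>
    (measurable_const.sub (hum k i)).ennreal_ofReal
  have hof : ∀ a b : ℝ, a ∈ Set.Icc (0 : ℝ) 1 → b ∈ Set.Icc (0 : ℝ) 1 →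
      ENNReal.ofReal (a - b) ≤ 1 := by
    intro a b ha hb
    rw [ENNReal.ofReal_le_one]
    linarith [ha.2, hb.1]
  have hv1 : ∀ k i z, v k i z ≤ 1 := fun k i z => hof _ _ (hu1 _ _ _) (hu1 _ _ _)
  have hvp1 : ∀ k i z, vp k i z ≤ 1 := fun k i z => hof _ _ (hu1 _ _ _) (hc1 _)
  have hvm1 : ∀ k i z, vm k i z ≤ 1 := fun k i z => hof _ _ (hc1 _) (hu1 _ _ _)
  let D : E × E → ENNReal := fun z => supLim fun k i => v k i z
  let Dp : E → ENNReal := fun z => supLim fun k i => vp k i z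
  let Dm : E → ENNReal := fun z => supLim fun k i => vm k i z
  have hD : Measurable D := supLim_measurable hvmeas
  have hDp : Measurable Dp := supLim_measurable hvpmeas
  have hDm : Measurable Dm := supLim_measurable hvmmeas
  have hD1 : ∀ z, D z ≤ 1 := fun z => supLim_le_one fun k i => hv1 k i z
  have hDp1 : ∀ z, Dp z ≤ 1 := fun z => supLim_le_one fun k i => hvp1 k i z
  have hDm1 : ∀ z, Dm z ≤ 1 := fun z => supLim_le_one fun k i => hvm1 k i z
  -- subharmonicity
  have hDsub : ∀ n z, D z ≤ ∫⁻ w, D w ∂((kpow P n z.1).prod (kpow P n z.2)) := by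
    intro n z
    have := supLim_le_lintegral hvmeas hv1 ((kpow P n z.1).prod (kpow P n z.2))
      (fun k i => v k i z) 1 n (fun k i => by
        have := ofReal_sub_le_prod (kpow P n z.1) (kpow P n z.2) (by simp) (hum k i) (hu1 k i)
        rw [← hun, ← hun] at this
        simpa using this)
    simpa using this
  have hDpsub : ∀ z, Dp z ≤ ∫⁻ w, Dp w ∂(P z) := by
    intro z
    have := supLim_le_lintegral hvpmeas hvp1 (P z) (fun k i => vp k i z) 1 1 (fun k i => by
        have i1 := integrable_unit (P z) (hum k i) (hu1 k i)
        have := ofReal_integral_le (P z) (i1.sub (integrable_const (c i)))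
        simp only [Pi.sub_apply] at this
        rw [integral_sub i1 (integrable_const _), ← hus] at this
        rw [add_comm]
        simpa using this)
    simpa using this
  have hDmsub : ∀ z, Dm z ≤ ∫⁻ w, Dm w ∂(P z) := by
    intro z
    have := supLim_le_lintegral hvmmeas hvm1 (P z) (fun k i => vm k i z) 1 1 (fun k i => by
        have i1 := integrable_unit (P z) (hum k i) (hu1 k i)
        have := ofReal_integral_le (P z) ((integrable_const (c i)).sub i1)
        simp only [Pi.sub_apply] at this
        rw [integral_sub (integrable_const _) i1, ← hus] at this
        rw [add_comm]
        simpa using this)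
    simpa using this
  have hDpD : ∀ y, Dp y ≤ ∫⁻ w, D (y, w) ∂π := by
    intro y
    have := supLim_le_lintegral (v := fun k i w => v k i (y, w))
      (fun k i => (hvmeas k i).comp measurable_prodMk_left) (fun k i w => hv1 _ _ _) π
      (fun k i => vp k i y) 1 0 (fun k i => by
        have i1 := integrable_unit π (hum k i) (hu1 k i)
        have := ofReal_integral_le π ((integrable_const (u k i y)).sub i1)
        simp only [Pi.sub_apply] at this
        rw [integral_sub (integrable_const _) i1, hc] at this
        simpa using this)
    simpa using this
  have hDmD : ∀ y, Dm y ≤ ∫⁻ w, D (w, y) ∂π := by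
    intro y
    have := supLim_le_lintegral (v := fun k i w => v k i (w, y))
      (fun k i => (hvmeas k i).comp measurable_prodMk_right) (fun k i w => hv1 _ _ _) π
      (fun k i => vm k i y) 1 0 (fun k i => by
        have i1 := integrable_unit π (hum k i) (hu1 k i)
        have := ofReal_integral_le π (i1.sub (integrable_const (u k i y)))
        simp only [Pi.sub_apply] at this
        rw [integral_sub i1 (integrable_const _), hc] at this
        simpa using this)
    simpa using this
  -- constancy of `D`
  have hconst : ∀ᵐ z ∂(π.prod π), ∀ n, ∀ᵐ w ∂((kpow P n z.1).prod (kpow P n z.2)), D w = D z := by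
    rw [ae_all_iff]
    intro n
    have hfin : ∀ z, D z ≠ ⊤ := fun z => ne_top_of_le_ne_top ENNReal.one_ne_top (hD1 z)
    have hd : Measurable fun z => (D z).toReal := hD.ennreal_toReal
    have hd1 : ∀ z, (D z).toReal ∈ Set.Icc (0 : ℝ) 1 := fun z =>
      ⟨ENNReal.toReal_nonneg, ENNReal.toReal_le_of_le_ofReal zero_le_one (by simpa using hD1 z)⟩
    have := subharmonic_const (π.prod π) (kpow P n ∥ₖ kpow P n)
      (prod_stat _ π (stat_kpow P π hstat n)) hd hd1 (by
        intro z
        rw [Kernel.parallelComp_apply, integral_toReal hD.aemeasurable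
          (ae_of_all _ fun w => (hfin w).lt_top)]
        refine ENNReal.toReal_mono ?_ (hDsub n z)
        refine ne_top_of_le_ne_top ENNReal.one_ne_top ?_
        calc _ ≤ ∫⁻ w, 1 ∂((kpow P n z.1).prod (kpow P n z.2)) := lintegral_mono fun w => hD1 w
          _ = _ := by simp)
    filter_upwards [this] with z hz
    rw [Kernel.parallelComp_apply] at hz
    filter_upwards [hz] with w hw
    exact (ENNReal.toReal_eq_toReal_iff' (hfin _) (hfin _)).1 hw
  -- contraction
  have hDzero : ∀ᵐ z ∂(π.prod π), D z = 0 := by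
    filter_upwards [hconst] with z hz
    obtain ⟨Ω, mΩ, μ, X, Y, ⟨hX, hY, -⟩, hhit⟩ := hach z.1 z.2
    have hXm := hX.2.1
    have hYm := hY.2.1
    have hXl := hX.law
    have hYl := hY.law
    have := hX.1
    have : ∃ n, μ {ω | (X n ω, Y n ω) ∈ {p : E × E | p.1 ≤ p.2}} ≠ 0 := by
      by_contra hcon
      push Not at hcon
      have h1 : ∀ᵐ ω ∂μ, ∀ n, ¬ (X n ω, Y n ω) ∈ {p : E × E | p.1 ≤ p.2} := by
        rw [ae_all_iff]
        intro n
        rw [ae_iff]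
        simpa using hcon n
      obtain ⟨ω, h2, n, h3⟩ := (h1.and hhit).exists
      exact h2 n h3
    obtain ⟨n, hn⟩ := this
    have hZ : Measurable fun ω => (X n ω, Y n ω) := (hXm n).prodMk (hYm n)
    set ρ := μ.map (fun ω => (X n ω, Y n ω)) with hρ
    have : IsProbabilityMeasure ρ := Measure.isProbabilityMeasure_map hZ.aemeasurable
    have hρM : ρ {p : E × E | p.1 ≤ p.2} ≠ 0 := by
      rw [hρ, Measure.map_apply hZ hM]; exact hn
    have hf : ρ.map Prod.fst = kpow P n z.1 := by
      rw [hρ, Measure.map_map measurable_fst hZ, ← hXl n]; rfl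
    have hs : ρ.map Prod.snd = kpow P n z.2 := by
      rw [hρ, Measure.map_map measurable_snd hZ, ← hYl n]; rfl
    set M := {p : E × E | p.1 ≤ p.2} with hMdef
    set α := (ρ.restrict Mᶜ).map Prod.fst with hα
    set β := (ρ.restrict Mᶜ).map Prod.snd with hβ
    have hαu : α Set.univ = ρ Mᶜ := by
      rw [hα, Measure.map_apply measurable_fst MeasurableSet.univ]; simp
    have hβu : β Set.univ = ρ Mᶜ := by
      rw [hβ, Measure.map_apply measurable_snd MeasurableSet.univ]; simp
    have hr1 : ρ Mᶜ < 1 := by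
      rw [prob_compl_eq_one_sub hM]
      exact ENNReal.sub_lt_self ENNReal.one_ne_top one_ne_zero hρM
    have hαle : α ≤ kpow P n z.1 := by
      rw [← hf]; exact Measure.map_mono Measure.restrict_le_self measurable_fst
    have hβle : β ≤ kpow P n z.2 := by
      rw [← hs]; exact Measure.map_mono Measure.restrict_le_self measurable_snd
    -- basic estimate
    have hest : ∀ k i, u (n + k) i z.1 - u (n + k) i z.2
        ≤ ∫ w, u k i w ∂α - ∫ w, u k i w ∂β := by
      intro k i
      have i1 : Integrable (fun p : E × E => u k i p.1) ρ :=
        integrable_unit _ ((hum k i).comp measurable_fst) fun p => hu1 k i p.1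
      have i2 : Integrable (fun p : E × E => u k i p.2) ρ :=
        integrable_unit _ ((hum k i).comp measurable_snd) fun p => hu1 k i p.2
      rw [hun, hun, ← hf, ← hs, hα, hβ,
        integral_map measurable_fst.aemeasurable (hum k i).aestronglyMeasurable,
        integral_map measurable_snd.aemeasurable (hum k i).aestronglyMeasurable,
        integral_map measurable_fst.aemeasurable (hum k i).aestronglyMeasurable,
        integral_map measurable_snd.aemeasurable (hum k i).aestronglyMeasurable,
        ← integral_sub i1 i2, ← integral_sub i1.integrableOn i2.integrableOn,
        ← integral_add_compl (f := fun p : E × E => u k i p.1 - u k i p.2) hM (i1.sub i2)]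
      have : ∫ p in M, (u k i p.1 - u k i p.2) ∂ρ ≤ 0 := by
        refine setIntegral_nonpos hM fun p hp => ?_
        have := humono k i hp
        linarith
      linarith
    have hmain : ρ Mᶜ * D z ≤ ∫⁻ w, D w ∂(α.prod β) := by
      refine supLim_le_lintegral hvmeas hv1 (α.prod β) (fun k i => v k i z) (ρ Mᶜ) n fun k i => ?_
      have := ofReal_sub_le_prod α β (hαu.trans hβu.symm) (hum k i) (hu1 k i)
      rw [hαu] at this
      refine le_trans ?_ this
      gcongr
      exact ENNReal.ofReal_le_ofReal (hest k i)
    have hae : ∀ᵐ w ∂(α.prod β), D w = D z := by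
      refine Measure.AbsolutelyContinuous.ae_le ?_ (hz n)
      exact (Measure.absolutelyContinuous_of_le hαle).prod (Measure.absolutelyContinuous_of_le hβle)
    have hint : ∫⁻ w, D w ∂(α.prod β) = D z * (ρ Mᶜ * ρ Mᶜ) := by
      rw [lintegral_congr_ae hae, lintegral_const, ← Set.univ_prod_univ, Measure.prod_prod, hαu,
        hβu]
    have hfin : D z ≠ ⊤ := ne_top_of_le_ne_top ENNReal.one_ne_top (hD1 z)
    by_cases hr0 : ρ Mᶜ = 0
    · have hα0 : α = 0 := Measure.measure_univ_eq_zero.1 (hαu.trans hr0)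
      have hβ0 : β = 0 := Measure.measure_univ_eq_zero.1 (hβu.trans hr0)
      refine le_antisymm ?_ zero_le
      refine iInf_le_of_le n (iSup_le fun k => iSup_le fun i => ?_)
      have := hest k i
      rw [hα0, hβ0] at this
      simp only [integral_zero_measure, sub_self] at this
      exact (ENNReal.ofReal_eq_zero.2 this).le
    · by_contra hne
      rw [hint] at hmain
      have hrt : ρ Mᶜ ≠ ⊤ := measure_ne_top _ _
      have h1 : ρ Mᶜ * D z * 1 ≤ ρ Mᶜ * D z * ρ Mᶜ := by
        calc _ = ρ Mᶜ * D z := mul_one _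
          _ ≤ _ := hmain
          _ = _ := by ring
      have h2 := (ENNReal.mul_le_mul_iff_right (mul_ne_zero hr0 hne)
        (ENNReal.mul_ne_top hrt hfin)).1 h1
      exact absurd hr1 (not_lt.2 h2)
  -- passage to a good point
  have hgood1 : ∀ᵐ y ∂π, Dp y = 0 := by
    have := Measure.ae_ae_of_ae_prod hDzero
    filter_upwards [this] with y hy
    refine le_antisymm ((hDpD y).trans ?_) zero_le
    rw [lintegral_congr_ae hy]; simp
  have hgood2 : ∀ᵐ y ∂π, Dm y = 0 := by
    have h' : ∀ᵐ z ∂(π.prod π), D z.swap = 0 := by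
      have h3 : Measure.map Prod.swap (π.prod π) = π.prod π := Measure.prod_swap
      rw [← h3] at hDzero
      exact ae_of_ae_map measurable_swap.aemeasurable hDzero
    have := Measure.ae_ae_of_ae_prod h'
    filter_upwards [this] with y hy
    refine le_antisymm ((hDmD y).trans ?_) zero_le
    rw [lintegral_congr_ae (f := fun w => D (w, y)) (g := fun _ => 0) hy]; simp
  have hgood : ∀ᵐ y ∂π, ∀ n, ∀ᵐ w ∂(kpow P n y), Dp w = 0 ∧ Dm w = 0 := by
    rw [ae_all_iff]
    intro n
    have h1 := hgood1.and hgood2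
    nth_rewrite 1 [← stat_kpow P π hstat n] at h1
    exact Measure.ae_ae_of_ae_comp h1
  obtain ⟨y, hy⟩ := hgood.exists
  have hDpx : Dp x = 0 := by
    obtain ⟨Ω, mΩ, μ, X, Y, ⟨hX, hY, -⟩, hhit⟩ := hach x y
    refine hit_zero hX hDp hDp1 hDpsub ?_
    have h1 : ∀ᵐ ω ∂μ, ∀ n, Dp (Y n ω) = 0 := by
      rw [ae_all_iff]
      intro n
      have := hy n
      rw [← hY.law n] at this
      exact (ae_of_ae_map (hY.2.1 n).aemeasurable this).mono fun ω h => h.1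
    filter_upwards [h1, hhit] with ω h2 ⟨n, hn⟩
    refine ⟨n, le_antisymm ?_ zero_le⟩
    rw [← h2 n]
    refine supLim_mono fun k i => ENNReal.ofReal_le_ofReal ?_
    have : u k i _ ≤ u k i _ := humono k i hn
    linarith
  have hDmx : Dm x = 0 := by
    obtain ⟨Ω, mΩ, μ, Y, X, ⟨hY, hX, -⟩, hhit⟩ := hach y x
    refine hit_zero hX hDm hDm1 hDmsub ?_
    have h1 : ∀ᵐ ω ∂μ, ∀ n, Dm (Y n ω) = 0 := by
      rw [ae_all_iff]
      intro n
      have := hy n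
      rw [← hY.law n] at this
      exact (ae_of_ae_map (hY.2.1 n).aemeasurable this).mono fun ω h => h.2
    filter_upwards [h1, hhit] with ω h2 ⟨n, hn⟩
    refine ⟨n, le_antisymm ?_ zero_le⟩
    rw [← h2 n]
    refine supLim_mono fun k i => ENNReal.ofReal_le_ofReal ?_
    have : u k i _ ≤ u k i _ := humono k i hn
    linarith
  have t1 := (ENNReal.tendsto_toReal ENNReal.zero_ne_top).comp (supLim_tendsto hDpx)
  have t2 := (ENNReal.tendsto_toReal ENNReal.zero_ne_top).comp (supLim_tendsto hDmx)
  have t3 := t1.add t2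
  simp only [ENNReal.toReal_zero, add_zero] at t3
  refine squeeze_zero (fun n => abs_nonneg _) (fun n => ?_) t3
  simp only [Function.comp_apply, vp, vm, ENNReal.toReal_ofReal']
  rw [abs_le]
  constructor
  · have := le_max_left (c n - u n n x) 0
    have := le_max_right (u n n x - c n) 0
    linarith
  · have := le_max_right (c n - u n n x) 0
    have := le_max_left (u n n x - c n) 0
    linarith

/-- iterates of the kernel on functions -/
noncomputable def kiter {E : Type*} [MeasurableSpace E] (P : Kernel E E) (g : E → ℝ) : ℕ → E → ℝ
  | 0 => g
  | k + 1 => fun x => ∫ y, kiter P g k y ∂(P x)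

theorem kiter_props {E : Type*} [MeasurableSpace E] [PartialOrder E] (P : Kernel E E)
    [IsMarkovKernel P] (hmono : MonotoneKernel P) (g : E → ℝ)
    (hg : Measurable g ∧ Monotone g ∧ ∀ z, g z ∈ Set.Icc (0 : ℝ) 1) (k : ℕ) :
    Measurable (kiter P g k) ∧ Monotone (kiter P g k) ∧
      ∀ z, kiter P g k z ∈ Set.Icc (0 : ℝ) 1 := by
  induction k with
  | zero => exact hg
  | succ k ih =>
    obtain ⟨h1, h2, h3⟩ := ih
    have := kernel_int_unit P h1 h3
    exact ⟨this.1, hmono _ h1 h2 h3, this.2⟩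

theorem kiter_eq {E : Type*} [MeasurableSpace E] [PartialOrder E] (P : Kernel E E)
    [IsMarkovKernel P] (hmono : MonotoneKernel P) (g : E → ℝ)
    (hg : Measurable g ∧ Monotone g ∧ ∀ z, g z ∈ Set.Icc (0 : ℝ) 1) (n : ℕ) :
    ∀ k x, kiter P g (n + k) x = ∫ y, kiter P g k y ∂(kpow P n x) := by
  induction n with
  | zero =>
    intro k x
    simp [kpow, Kernel.id_apply,
      integral_dirac' _ _ (kiter_props P hmono g hg k).1.stronglyMeasurable]
  | succ n ih =>
    intro k x
    have : n + 1 + k = n + (k + 1) := by ring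
    rw [this, ih]
    simp only [kpow]
    have hp := kiter_props P hmono g hg k
    rw [Kernel.comp_apply, integral_bind_unit _ _ hp.1 hp.2.2]
    rfl

/-- Theorem 3.4 ii: if `M` is achievable for a monotone kernel `P` and a
stationary distribution `π` exists, then `π` is the unique stationary distribution and,
for each `x`, `sup_{g ∈ G} |E g(Xₙˣ) − ∫ g dπ| → 0` as `n → ∞`. -/
theorem stmt8 {E : Type*} [MetricSpace E] [PolishSpace E] [MeasurableSpace E] [BorelSpace E]
    [PartialOrder E] [OrderClosedTopology E]
    (P : Kernel E E) [IsMarkovKernel P] (hmono : MonotoneKernel P)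
    (hach : Achievable P {p : E × E | p.1 ≤ p.2})
    (π : Measure E) [IsProbabilityMeasure π] (hstat : π.bind (fun a => P a) = π) :
    (∀ π' : Measure E, IsProbabilityMeasure π' → π'.bind (fun a => P a) = π' → π' = π) ∧
    ∀ x : E,
      Tendsto
        (fun n =>
          ⨆ g : {g : E → ℝ // Measurable g ∧ Monotone g ∧ ∀ z, g z ∈ Set.Icc (0 : ℝ) 1},
            |∫ z, g.1 z ∂(kpow P n x) - ∫ z, g.1 z ∂π|)
        atTop (nhds 0) := by
  have hstat' : π.bind P = π := hstat
  have core : ∀ (g : ℕ → {g : E → ℝ // Measurable g ∧ Monotone g ∧ ∀ z, g z ∈ Set.Icc (0 : ℝ) 1})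
      (x : E), Tendsto (fun n => |∫ z, (g n).1 z ∂(kpow P n x) - ∫ z, (g n).1 z ∂π|)
        atTop (𝓝 0) := by
    intro g x
    have := core_conv P hach π hstat' (fun k i => kiter P (g i).1 k)
      (fun k i => (kiter_props P hmono _ (g i).2 k).1)
      (fun k i => (kiter_props P hmono _ (g i).2 k).2.1)
      (fun k i => (kiter_props P hmono _ (g i).2 k).2.2)
      (fun k i x => rfl) x
    refine this.congr fun n => ?_
    have e := kiter_eq P hmono _ (g n).2 n 0 x
    simp only [add_zero] at e
    rw [e]
    rfl
  refine ⟨?_, ?_⟩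
  · intro π' hπ' hst
    have hst' : π'.bind P = π' := hst
    refine measure_ext_upper π' π fun I hI hIu => ?_
    let g : {g : E → ℝ // Measurable g ∧ Monotone g ∧ ∀ z, g z ∈ Set.Icc (0 : ℝ) 1} :=
      ⟨I.indicator fun _ => 1, measurable_const.indicator hI, by
        intro a b hab
        by_cases ha : a ∈ I
        · have hb : b ∈ I := hIu hab ha
          simp [ha, hb]
        · simp only [ha, not_false_eq_true, Set.indicator_of_notMem]
          exact Set.indicator_nonneg (fun _ _ => zero_le_one) b, by
        intro z
        by_cases hz : z ∈ I <;> simp [hz]⟩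
    have hx : ∀ x, Tendsto (fun n => ∫ z, g.1 z ∂(kpow P n x)) atTop (𝓝 (∫ z, g.1 z ∂π)) := by
      intro x
      have := core (fun _ => g) x
      rw [tendsto_iff_dist_tendsto_zero]
      exact this
    have hlim : Tendsto (fun n => ∫ x, ∫ z, g.1 z ∂(kpow P n x) ∂π') atTop
        (𝓝 (∫ x, ∫ z, g.1 z ∂π ∂π')) := by
      refine tendsto_integral_of_dominated_convergence (fun _ => 1) ?_ (integrable_const _) ?_
        (ae_of_all _ hx)
      · intro n
        exact (kernel_int_unit (kpow P n) g.2.1 g.2.2.2).1.aestronglyMeasurable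
      · intro n
        refine ae_of_all _ fun x => ?_
        have := (kernel_int_unit (kpow P n) g.2.1 g.2.2.2).2 x
        rw [Real.norm_eq_abs, abs_of_nonneg this.1]
        exact this.2
    have hcst : ∀ n, ∫ x, ∫ z, g.1 z ∂(kpow P n x) ∂π' = ∫ z, g.1 z ∂π' := by
      intro n
      rw [← integral_bind_unit π' (kpow P n) g.2.1 g.2.2.2, stat_kpow P π' hst' n]
    simp only [hcst] at hlim
    have heq := tendsto_nhds_unique tendsto_const_nhds hlim
    simp only [integral_const, probReal_univ, one_smul] at heq
    have hval : ∀ ν : Measure E, ∫ z, g.1 z ∂ν = (ν I).toReal := by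
      intro ν
      simp [g, integral_indicator hI, Measure.real]
    rw [hval, hval] at heq
    exact (ENNReal.toReal_eq_toReal_iff' (measure_ne_top _ _) (measure_ne_top _ _)).1 heq
  · intro x
    let G := {g : E → ℝ // Measurable g ∧ Monotone g ∧ ∀ z, g z ∈ Set.Icc (0 : ℝ) 1}
    have : Nonempty G := ⟨⟨fun _ => 0, measurable_const, monotone_const, fun _ => by simp⟩⟩
    have hex : ∀ n : ℕ, ∃ g : G,
        (⨆ g : G, |∫ z, g.1 z ∂(kpow P n x) - ∫ z, g.1 z ∂π|) - 1 / ((n : ℝ) + 1)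
          < |∫ z, g.1 z ∂(kpow P n x) - ∫ z, g.1 z ∂π| := by
      intro n
      exact exists_lt_of_lt_ciSup (sub_lt_self _ (by positivity))
    choose g hg using hex
    have t := (core g x).add tendsto_one_div_add_atTop_nhds_zero_nat
    simp only [add_zero] at t
    refine squeeze_zero (fun n => Real.iSup_nonneg fun _ => abs_nonneg _) (fun n => ?_) t
    have := hg n
    linarith
end
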